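/- arXiv:2305.13730 — 2 statements merged into one kernel-verified Lean document; each statement's English description precedes it below -/
import Mathlib

section
/- Let n ≥ 3 and r ≥ 3 be integers. There exists a constant c > 0 such that for every odd prime power q and every T ∈ M_n(𝔽_q), the matrix sphere σ_T ⊆ (M_n(𝔽_q))^r satisfies |#σ_T − q^{n²(r−1)}| ≤ c·q^{(r−1)n² − (n−1)(r−2)}; in particular #σ_T ∼ q^{n²(r−1)} as q → ∞. -/
open scoped BigOperators

/-- The additive character `ψ(X) = exp((2πi/p)·Tr_{F/F_p}(Tr X))` on `n × n` matrices
over a finite field `F` of characteristic `p`. -/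
noncomputable def psi (F : Type) [Field F] [Fintype F] {n : ℕ}
    (X : Matrix (Fin n) (Fin n) F) : ℂ :=
  letI : Algebra (ZMod (ringChar F)) F := ZMod.algebra _ _
  Complex.exp (2 * Real.pi * Complex.I *
    (((Algebra.trace (ZMod (ringChar F)) F X.trace).val : ℂ) / (ringChar F : ℂ)))

/-- The radical `{X : Tr(A(XY+YX)) = 0 for all Y}` of the quadratic form
`X ↦ Tr(AX²)` on `M_n(F)`. -/
def radical (F : Type) [Field F] [Fintype F] {n : ℕ}
    (A : Matrix (Fin n) (Fin n) F) : Submodule F (Matrix (Fin n) (Fin n) F) where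
  carrier := {X : Matrix (Fin n) (Fin n) F |
    ∀ Y : Matrix (Fin n) (Fin n) F, (A * (X * Y + Y * X)).trace = 0}
  zero_mem' := by intro Y; simp
  add_mem' := by
    intro X₁ X₂ h₁ h₂ Y
    have e : A * ((X₁ + X₂) * Y + Y * (X₁ + X₂))
        = A * (X₁ * Y + Y * X₁) + A * (X₂ * Y + Y * X₂) := by noncomm_ring
    show (A * ((X₁ + X₂) * Y + Y * (X₁ + X₂))).trace = 0
    rw [e, Matrix.trace_add, h₁ Y, h₂ Y, add_zero]
  smul_mem' := by
    intro c X h Y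
    have e : A * ((c • X) * Y + Y * (c • X)) = c • (A * (X * Y + Y * X)) := by
      rw [smul_mul_assoc, Matrix.mul_smul, ← smul_add, Matrix.mul_smul]
    show (A * ((c • X) * Y + Y * (c • X))).trace = 0
    rw [e, Matrix.trace_smul, h Y, smul_zero]

/-- The radical invariant `ρ_A`: the `F`-dimension of the radical of `X ↦ Tr(AX²)`. -/
noncomputable def rho (F : Type) [Field F] [Fintype F] {n : ℕ}
    (A : Matrix (Fin n) (Fin n) F) : ℕ :=
  Module.finrank F (radical F A)

/-- The quadratic matrix Gauss sum `G(A,B) = Σ_X ψ(AX² + BX)`. -/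
noncomputable def matGaussSum (F : Type) [Field F] [Fintype F] {n : ℕ}
    (A B : Matrix (Fin n) (Fin n) F) : ℂ :=
  ∑ X : Matrix (Fin n) (Fin n) F, psi F (A * X ^ 2 + B * X)

/-- The matrix sphere `σ_T = {X ∈ M_n(F)^r : X₁² + ⋯ + X_r² = T}`. -/
def matSphere (F : Type) [Field F] [Fintype F] [DecidableEq F] {n : ℕ} (r : ℕ)
    (T : Matrix (Fin n) (Fin n) F) : Finset (Fin r → Matrix (Fin n) (Fin n) F) :=
  Finset.univ.filter (fun X => ∑ i, (X i) ^ 2 = T)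

/-- The Fourier transform `f̂(M) = q^{-rn²} Σ_A f(A) conj(ψ(M·A))` on `M_n(F)^r`. -/
noncomputable def matFourier (F : Type) [Field F] [Fintype F] {n r : ℕ}
    (f : (Fin r → Matrix (Fin n) (Fin n) F) → ℂ)
    (M : Fin r → Matrix (Fin n) (Fin n) F) : ℂ :=
  ((Fintype.card F : ℂ) ^ (r * n ^ 2))⁻¹ *
    ∑ A : Fin r → Matrix (Fin n) (Fin n) F, f A * (starRingEnd ℂ) (psi F (∑ i, M i * A i))

/-!
Fourier inversion on `M_n(F)`, with `q` the size of `F`, gives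
`q ^ n² * #σ_T = ∑ A, ψ(-AT) * G(A, 0) ^ r`. The term `A = 0` is the main term `q ^ (n² r)`, and
`‖G(A, 0)‖ ^ 2 ≤ q ^ (n² + ρ_A)`, where `ρ_A = dim {X | AX = -XA}`. For `A ≠ 0` one has
`ρ_A ≤ n² - 2n + 2`; used for all but three of the `r` factors, this reduces the theorem to the
cubic moment bound `∑_{A ≠ 0} q ^ (3 ρ_A / 2) ≪ q ^ (3 n² / 2 - n + 1)`.

Up to conjugation `A` is `N ⊕ B` with `N` nilpotent and `B` invertible of size `m`, and
`ρ_A ≤ ρ_N + ρ_B`. Unless `A = 0` or `A²` is a nonzero scalar, `ρ_A ≤ n² - 2n + 2 - m`, so it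
suffices that the first moment of `q ^ ρ_A` over the matrices of a given `m` is
`≪ q ^ (n² + m / 2)`. Here the input is that a conjugacy class contributes at most `2 q ^ n²` to
`∑ A, q ^ dim {X | AX = XA}`: for large `q` at least half of a centralizer is invertible.

* A nilpotent `N` is conjugate to `-N`, so `ρ_N` is the dimension of its centralizer, and the number
  of nilpotent classes is bounded in terms of `n`.
* For `B` invertible, `∑ B, q ^ ρ_B` counts pairs with `BX = -XB`. Then `X` is conjugate to `-X`, so
  half of the coefficients of its characteristic polynomial vanish; summing over `X` first leaves
  `O(q ^ (m / 2))` classes.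
* If `A²` is a nonzero scalar, then `2 ρ_A ≤ n²` and `ρ_A + dim {X | AX = XA} = n²`, while there are
  only `O(q)` classes of such `A`.
-/

namespace MatrixSphere

open Module Matrix Polynomial
open scoped Finset

section Intertwiners

variable {R : Type*} [CommRing R] {ι κ : Type*} [Fintype ι] [Fintype κ]

/-- The space of matrices `X` intertwining `A` and `B`, i.e. `A * X = X * B`. It is the centralizer
of `A` when `B = A`, and it turns out to be the radical of `X ↦ Tr(AX²)` when `B = -A`. -/
def intertwiners (A : Matrix ι ι R) (B : Matrix κ κ R) : Submodule R (Matrix ι κ R) :=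
  LinearMap.ker (mulLeftLinearMap κ R A - mulRightLinearMap ι R B)

@[simp] theorem mem_intertwiners {A : Matrix ι ι R} {B : Matrix κ κ R} {X : Matrix ι κ R} :
    X ∈ intertwiners A B ↔ A * X = X * B := by
  simp [intertwiners, sub_eq_zero]

theorem pow_mul_eq_mul_pow_of_mem_intertwiners [DecidableEq ι] [DecidableEq κ] {A : Matrix ι ι R}
    {B : Matrix κ κ R} {X : Matrix ι κ R} (hX : X ∈ intertwiners A B) (j : ℕ) :
    A ^ j * X = X * B ^ j := by
  rw [mem_intertwiners] at hX
  induction j with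
  | zero => simp
  | succ j ih =>
    rw [pow_succ, pow_succ, Matrix.mul_assoc, hX, ← Matrix.mul_assoc, ih, Matrix.mul_assoc]

theorem intertwiners_eq_bot_of_isNilpotent_left [DecidableEq ι] [DecidableEq κ] {A : Matrix ι ι R}
    {B : Matrix κ κ R} (hA : IsNilpotent A) (hB : IsUnit B) : intertwiners A B = ⊥ := by
  obtain ⟨j, hj⟩ := hA
  obtain ⟨C, hC⟩ := (hB.pow j).exists_right_inv
  refine (Submodule.eq_bot_iff _).2 fun X hX => ?_
  calc X = X * B ^ j * C := by rw [Matrix.mul_assoc, hC, Matrix.mul_one]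
    _ = 0 := by
      rw [← pow_mul_eq_mul_pow_of_mem_intertwiners hX, hj, Matrix.zero_mul, Matrix.zero_mul]

theorem intertwiners_eq_bot_of_isNilpotent_right [DecidableEq ι] [DecidableEq κ] {A : Matrix ι ι R}
    {B : Matrix κ κ R} (hA : IsUnit A) (hB : IsNilpotent B) : intertwiners A B = ⊥ := by
  obtain ⟨j, hj⟩ := hB
  obtain ⟨C, hC⟩ := (hA.pow j).exists_left_inv
  refine (Submodule.eq_bot_iff _).2 fun X hX => ?_
  calc X = C * (A ^ j * X) := by rw [← Matrix.mul_assoc, hC, Matrix.one_mul]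
    _ = 0 := by
      rw [pow_mul_eq_mul_pow_of_mem_intertwiners hX, hj, Matrix.mul_zero, Matrix.mul_zero]

end Intertwiners

section Dimension

variable {F : Type*} [Field F] {ι κ : Type*} [Fintype ι] [Fintype κ] [DecidableEq ι]
  [DecidableEq κ]

theorem finrank_intertwiners_le_of_isConj {A A' : Matrix ι ι F} {B B' : Matrix κ κ F}
    (hA : IsConj A A') (hB : IsConj B B') :
    finrank F (intertwiners A B) ≤ finrank F (intertwiners A' B') := by
  obtain ⟨g, hg⟩ := hA
  obtain ⟨h, hh⟩ := hB.symm
  replace hg : g * A = A' * g := hg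
  replace hh : h * B' = B * h := hh
  let Φ : Matrix ι κ F →ₗ[F] Matrix ι κ F :=
    mulLeftLinearMap κ F (g : Matrix ι ι F) ∘ₗ mulRightLinearMap ι F (h : Matrix κ κ F)
  have hΦ : ∀ X ∈ intertwiners A B, Φ X ∈ intertwiners A' B' := fun X hX => by
    rw [mem_intertwiners] at hX ⊢
    change A' * ((g : Matrix ι ι F) * (X * (h : Matrix κ κ F))) =
      (g : Matrix ι ι F) * (X * (h : Matrix κ κ F)) * B'
    rw [← Matrix.mul_assoc, ← hg, Matrix.mul_assoc, ← Matrix.mul_assoc A, hX]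
    simp only [Matrix.mul_assoc, hh]
  have hΦ_inj : Function.Injective Φ := Function.LeftInverse.injective
    (g := fun X => (↑g⁻¹ : Matrix ι ι F) * X * (↑h⁻¹ : Matrix κ κ F)) fun X => by
      change (↑g⁻¹ : Matrix ι ι F) * ((g : Matrix ι ι F) * (X * (h : Matrix κ κ F))) *
        (↑h⁻¹ : Matrix κ κ F) = X
      rw [← Matrix.mul_assoc, Units.inv_mul, Matrix.one_mul, Matrix.mul_assoc, Units.mul_inv,
        Matrix.mul_one]
  exact LinearMap.finrank_le_finrank_of_injective (f := Φ.restrict hΦ)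
    fun X Y hXY => Subtype.ext (hΦ_inj (congrArg Subtype.val hXY))

theorem finrank_intertwiners_eq_of_isConj {A A' : Matrix ι ι F} {B B' : Matrix κ κ F}
    (hA : IsConj A A') (hB : IsConj B B') :
    finrank F (intertwiners A B) = finrank F (intertwiners A' B') :=
  (finrank_intertwiners_le_of_isConj hA hB).antisymm
    (finrank_intertwiners_le_of_isConj hA.symm hB.symm)

theorem finrank_matrix_self (ι κ F : Type*) [Fintype ι] [Fintype κ] [Field F] :
    finrank F (Matrix ι κ F) = Fintype.card ι * Fintype.card κ := by
  rw [finrank_matrix, finrank_self, mul_one]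

theorem exists_linearIndependent_mulVec {A : Matrix ι ι F} (hA : A ∉ Set.range (scalar ι)) :
    ∃ v, LinearIndependent F ![v, A *ᵥ v] := by
  by_contra! h
  obtain ⟨a, ha⟩ := LinearMap.exists_eq_smul_id_of_forall_notLinearIndependent (f := toLin' A) h
  refine hA ⟨a, toLin'.injective ?_⟩
  rw [ha, scalar_apply, ← smul_one_eq_diagonal, map_smul, toLin'_one]
  rfl

omit [DecidableEq ι] [DecidableEq κ] in
theorem eq_zero_of_mem_intertwiners {A : Matrix ι ι F} {B : Matrix κ κ F} {X : Matrix ι κ F}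
    (hX : X ∈ intertwiners A B) {v : ι → F} (hv : LinearIndependent F ![v, A *ᵥ v])
    (hXv : ∀ u, X *ᵥ u ∈ Submodule.span F {v}) : X = 0 := by
  classical
  refine toLin'.injective (LinearMap.ext fun u => ?_)
  obtain ⟨c, hc⟩ := Submodule.mem_span_singleton.1 (hXv u)
  obtain ⟨d, hd⟩ := Submodule.mem_span_singleton.1 (hXv (B *ᵥ u))
  have hAv : (-d) • v + c • A *ᵥ v = 0 := by
    rw [← mulVec_smul, hc, neg_smul, hd, mulVec_mulVec, mulVec_mulVec, mem_intertwiners.1 hX,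
      neg_add_cancel]
  have hc0 : c = 0 := (LinearIndependent.pair_iff.1 hv _ _ hAv).2
  simpa [hc0] using hc.symm

omit [DecidableEq ι] [DecidableEq κ] in
theorem eq_zero_of_mem_intertwiners_of_codisjoint {A : Matrix ι ι F} {B : Matrix κ κ F}
    {X : Matrix ι κ F} (hX : X ∈ intertwiners A B) {v : ι → F}
    (hv : LinearIndependent F ![v, A *ᵥ v]) {w : κ → F} {W : Submodule F (κ → F)}
    (hW : Codisjoint (Submodule.span F (Set.range ![w, B *ᵥ w])) W) (hXw : X *ᵥ w = 0)
    (hXW : ∀ u ∈ W, X *ᵥ u ∈ Submodule.span F {v}) : X = 0 := by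
  classical
  refine eq_zero_of_mem_intertwiners hX hv fun u => ?_
  have hspan_le : Submodule.span F (Set.range ![w, B *ᵥ w]) ≤
      (Submodule.span F {v}).comap (toLin' X) := by
    rw [Submodule.span_le]
    rintro _ ⟨i, rfl⟩
    fin_cases i
    · simp [hXw]
    · have hXBw : X *ᵥ (B *ᵥ w) = 0 := by
        rw [mulVec_mulVec, ← mem_intertwiners.1 hX, ← mulVec_mulVec, hXw, mulVec_zero]
      simp [-mulVec_mulVec, hXBw]
  exact hW.eq_top ▸ sup_le hspan_le hXW <| Submodule.mem_top (x := u)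

theorem finrank_span_singleton_quotient {V : Type*} [AddCommGroup V] [Module F V]
    [FiniteDimensional F V] {v : V} (hv : v ≠ 0) :
    finrank F (V ⧸ Submodule.span F {v}) + 1 = finrank F V := by
  rw [← finrank_span_singleton (K := F) hv, Submodule.finrank_quotient_add_finrank]

/- If `v, Av` and `w, Bw` are independent, then an intertwiner `X` is determined by `Xw` and by its
values modulo `v` on a complement of `⟨w, Bw⟩`. -/
theorem finrank_intertwiners_add_card_le {A : Matrix ι ι F} {B : Matrix κ κ F}
    (hA : A ∉ Set.range (scalar ι)) (hB : B ∉ Set.range (scalar κ)) :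
    finrank F (intertwiners A B) + (Fintype.card ι + Fintype.card κ) ≤
      Fintype.card ι * Fintype.card κ + 2 := by
  obtain ⟨v, hv⟩ := exists_linearIndependent_mulVec hA
  obtain ⟨w, hw⟩ := exists_linearIndependent_mulVec hB
  let U : Submodule F (κ → F) := Submodule.span F (Set.range ![w, B *ᵥ w])
  obtain ⟨W, hUW⟩ := U.exists_isCompl
  let Φ : intertwiners A B →ₗ[F] (ι → F) × (W →ₗ[F] (ι → F) ⧸ Submodule.span F {v}) :=
    { toFun := fun X => (X.1 *ᵥ w, (Submodule.span F {v}).mkQ ∘ₗ toLin' X.1 ∘ₗ W.subtype)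
      map_add' := fun X Y => by ext <;> simp [add_mulVec]
      map_smul' := fun a X => by ext <;> simp [smul_mulVec] }
  have hΦ : Function.Injective Φ := by
    refine (injective_iff_map_eq_zero Φ).2 fun X hX => Subtype.ext ?_
    obtain ⟨hXw, hXW⟩ := Prod.mk.inj hX
    exact eq_zero_of_mem_intertwiners_of_codisjoint X.2 hv hUW.codisjoint hXw fun u hu =>
      (Submodule.Quotient.mk_eq_zero (Submodule.span F {v})).1 (LinearMap.congr_fun hXW ⟨u, hu⟩)
  have hle : finrank F (intertwiners A B) ≤
      Fintype.card ι + finrank F W * finrank F ((ι → F) ⧸ Submodule.span F {v}) := by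
    simpa [finrank_linearMap] using LinearMap.finrank_le_finrank_of_injective hΦ
  have hdim_U : finrank F U = 2 := by simpa using finrank_span_eq_card hw
  have hdim_W : 2 + finrank F W = Fintype.card κ := by
    rw [← hdim_U, Submodule.finrank_add_eq_of_isCompl hUW, finrank_pi]
  have hdim_Q : finrank F ((ι → F) ⧸ Submodule.span F {v}) + 1 = Fintype.card ι := by
    rw [finrank_span_singleton_quotient (v := v) (hv.ne_zero 0), finrank_pi]
  rw [← hdim_Q] at hle
  rw [← hdim_W, ← hdim_Q]
  linarith

end Dimension

section Anticommuting

variable {F : Type*} [Field F] {ι κ : Type*} [Fintype ι] [Fintype κ] [DecidableEq ι]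
  [DecidableEq κ]

theorem intertwiners_scalar_neg_eq_bot (h2 : (2 : F) ≠ 0) {a : F} (ha : a ≠ 0) :
    intertwiners (scalar ι a) (-scalar κ a) = ⊥ := by
  refine (Submodule.eq_bot_iff _).2 fun X hX => ?_
  have h2a : (2 * a) • X = 0 := by
    have h : a • X = -(a • X) := by simpa [← smul_one_eq_diagonal] using hX
    rw [← smul_smul, two_smul, ← eq_neg_iff_add_eq_zero, ← h]
  exact (smul_eq_zero_iff_right (mul_ne_zero h2 ha)).1 h2a

omit [DecidableEq ι] in
theorem finrank_intertwiners_neg_add_le (h2 : (2 : F) ≠ 0) {A : Matrix ι ι F} (hA : A ≠ 0) :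
    finrank F (intertwiners A (-A)) + 2 * Fintype.card ι ≤ Fintype.card ι ^ 2 + 2 := by
  classical
  by_cases hs : A ∈ Set.range (scalar ι)
  · obtain ⟨a, rfl⟩ := hs
    rw [intertwiners_scalar_neg_eq_bot h2 (by rintro rfl; simp at hA), finrank_bot]
    nlinarith [sq_nonneg ((Fintype.card ι : ℤ) - 1)]
  · have hs_neg : -A ∉ Set.range (scalar ι) := fun ⟨a, ha⟩ => hs ⟨-a, by rw [map_neg, ha, neg_neg]⟩
    have := finrank_intertwiners_add_card_le hs hs_neg
    linarith

theorem disjoint_intertwiners_self_neg (h2 : (2 : F) ≠ 0) {B : Matrix ι ι F} (hB : IsUnit B) :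
    Disjoint (intertwiners B B) (intertwiners B (-B)) := by
  refine Submodule.disjoint_def.2 fun X hX hX_neg => ?_
  rw [mem_intertwiners] at hX hX_neg
  have h2XB : (2 : F) • X * B = 0 := by
    rw [two_smul, add_mul]
    nth_rw 1 [← hX]
    rw [hX_neg, mul_neg, neg_add_cancel]
  exact (smul_eq_zero_iff_right h2).1 (hB.mul_left_eq_zero.1 h2XB)

/- An `X` commuting with `B ^ 2` is the sum of its halves `(X ± B * X * B⁻¹) / 2`. -/
theorem intertwiners_self_sup_neg (h2 : (2 : F) ≠ 0) {B : Matrix ι ι F} (hB : IsUnit B) :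
    intertwiners B B ⊔ intertwiners B (-B) = intertwiners (B ^ 2) (B ^ 2) := by
  refine le_antisymm (sup_le (fun X hX => ?_) fun X hX => ?_) fun X hX => ?_
  · exact mem_intertwiners.2 (pow_mul_eq_mul_pow_of_mem_intertwiners hX 2)
  · rw [mem_intertwiners, pow_mul_eq_mul_pow_of_mem_intertwiners hX 2, neg_sq]
  · obtain ⟨u, rfl⟩ := hB
    set B : Matrix ι ι F := ↑u
    set C : Matrix ι ι F := ↑u⁻¹
    have hCB : C * B = 1 := u.inv_mul
    have hBY : B * (B * X * C) = X * B := by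
      rw [mem_intertwiners, sq] at hX
      rw [← mul_assoc, ← mul_assoc, hX, mul_assoc, mul_assoc, u.mul_inv, mul_one]
    have hYB : B * X * C * B = B * X := by rw [mul_assoc, hCB, mul_one]
    refine Submodule.mem_sup.2
      ⟨(2⁻¹ : F) • (X + B * X * C), ?_, (2⁻¹ : F) • (X - B * X * C), ?_, ?_⟩
    · rw [mem_intertwiners, Matrix.mul_smul, smul_mul, mul_add, add_mul, hBY, hYB, add_comm]
    · rw [mem_intertwiners, Matrix.mul_smul, smul_mul, mul_sub, mul_neg, sub_mul, hBY, hYB, neg_sub]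
    · rw [← smul_add, add_add_sub_cancel, ← two_smul F X, smul_smul, inv_mul_cancel₀ h2, one_smul]

theorem finrank_intertwiners_self_add_neg (h2 : (2 : F) ≠ 0) {B : Matrix ι ι F} (hB : IsUnit B) :
    finrank F (intertwiners B B) + finrank F (intertwiners B (-B)) =
      finrank F (intertwiners (B ^ 2) (B ^ 2)) := by
  rw [← Submodule.finrank_sup_add_finrank_inf_eq, (disjoint_intertwiners_self_neg h2 hB).eq_bot,
    finrank_bot, add_zero, intertwiners_self_sup_neg h2 hB]

end Anticommuting

section Blocks

variable {R : Type*} [CommRing R] {ι κ μ : Type*} [Fintype ι] [Fintype κ] [Fintype μ]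
  [DecidableEq ι] [DecidableEq κ] [DecidableEq μ]

/-- The block diagonal matrix with diagonal blocks `P.1` and `P.2`, indexed by `ι` through the
splitting `e` of `ι` into two parts. -/
def blockDiagHom (e : κ ⊕ μ ≃ ι) : Matrix κ κ R × Matrix μ μ R →* Matrix ι ι R where
  toFun P := reindexAlgEquiv R R e (fromBlocks P.1 0 0 P.2)
  map_one' := by simp
  map_mul' P Q := by rw [← map_mul, fromBlocks_multiply]; simp

theorem blockDiagHom_injective (e : κ ⊕ μ ≃ ι) :
    Function.Injective (blockDiagHom (R := R) e) := fun P Q h => by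
  obtain ⟨h₁, -, -, h₂⟩ := fromBlocks_inj.1 ((reindexAlgEquiv R R e).injective h)
  exact Prod.ext h₁ h₂

theorem submatrix_blockDiagHom (e : κ ⊕ μ ≃ ι) (P : Matrix κ κ R × Matrix μ μ R) :
    (blockDiagHom e P).submatrix e e = fromBlocks P.1 0 0 P.2 := by
  ext i j
  simp [blockDiagHom]

theorem blockDiagHom_neg (e : κ ⊕ μ ≃ ι) (A : Matrix κ κ R) (B : Matrix μ μ R) :
    blockDiagHom e (-A, -B) = -blockDiagHom e (A, B) := by
  change reindexAlgEquiv R R e (fromBlocks (-A) 0 0 (-B)) = -reindexAlgEquiv R R e _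
  rw [← map_neg, fromBlocks_neg, neg_zero, neg_zero]

omit [DecidableEq κ] [DecidableEq μ] in
theorem fromBlocks_mem_intertwiners_iff {A A' : Matrix κ κ R} {B B' : Matrix μ μ R}
    {X₁₁ : Matrix κ κ R} {X₁₂ : Matrix κ μ R} {X₂₁ : Matrix μ κ R} {X₂₂ : Matrix μ μ R} :
    fromBlocks X₁₁ X₁₂ X₂₁ X₂₂ ∈ intertwiners (fromBlocks A 0 0 B) (fromBlocks A' 0 0 B') ↔
      X₁₁ ∈ intertwiners A A' ∧ X₁₂ ∈ intertwiners A B' ∧ X₂₁ ∈ intertwiners B A' ∧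
        X₂₂ ∈ intertwiners B B' := by
  simp [fromBlocks_multiply, fromBlocks_inj]

theorem submatrix_mem_intertwiners_of_blockDiagHom {e : κ ⊕ μ ≃ ι}
    {P Q : Matrix κ κ R × Matrix μ μ R} {X : Matrix ι ι R}
    (hX : X ∈ intertwiners (blockDiagHom e P) (blockDiagHom e Q)) :
    X.submatrix e e ∈ intertwiners (fromBlocks P.1 0 0 P.2) (fromBlocks Q.1 0 0 Q.2) := by
  rw [mem_intertwiners] at hX ⊢
  rw [← submatrix_blockDiagHom e, ← submatrix_blockDiagHom e, submatrix_mul_equiv,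
    submatrix_mul_equiv, hX]

end Blocks

section BlocksField

variable {F : Type*} [Field F] {ι κ μ : Type*} [Fintype ι] [Fintype κ] [Fintype μ]
  [DecidableEq ι] [DecidableEq κ] [DecidableEq μ]

theorem finrank_intertwiners_blockDiagHom_le (e : κ ⊕ μ ≃ ι)
    (P Q : Matrix κ κ F × Matrix μ μ F) :
    finrank F (intertwiners (blockDiagHom e P) (blockDiagHom e Q)) ≤
      finrank F (intertwiners P.1 Q.1) + (finrank F (intertwiners P.1 Q.2) +
        (finrank F (intertwiners P.2 Q.1) + finrank F (intertwiners P.2 Q.2))) := by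
  have hmem (X : intertwiners (blockDiagHom e P) (blockDiagHom e Q)) :
      (X.1.submatrix e e).toBlocks₁₁ ∈ intertwiners P.1 Q.1 ∧
      (X.1.submatrix e e).toBlocks₁₂ ∈ intertwiners P.1 Q.2 ∧
      (X.1.submatrix e e).toBlocks₂₁ ∈ intertwiners P.2 Q.1 ∧
      (X.1.submatrix e e).toBlocks₂₂ ∈ intertwiners P.2 Q.2 := by
    rw [← fromBlocks_mem_intertwiners_iff, fromBlocks_toBlocks]
    exact submatrix_mem_intertwiners_of_blockDiagHom X.2
  let Φ : intertwiners (blockDiagHom e P) (blockDiagHom e Q) →ₗ[F] intertwiners P.1 Q.1 ×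
      intertwiners P.1 Q.2 × intertwiners P.2 Q.1 × intertwiners P.2 Q.2 :=
    { toFun := fun X => (⟨_, (hmem X).1⟩, ⟨_, (hmem X).2.1⟩, ⟨_, (hmem X).2.2.1⟩,
        ⟨_, (hmem X).2.2.2⟩)
      map_add' := fun X Y => rfl
      map_smul' := fun a X => rfl }
  have hΦ : Function.Injective Φ := fun X Y hXY => by
    refine Subtype.ext ((reindex e.symm e.symm).injective ?_)
    change X.1.submatrix e e = Y.1.submatrix e e
    rw [← fromBlocks_toBlocks (X.1.submatrix e e), ← fromBlocks_toBlocks (Y.1.submatrix e e),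
      fromBlocks_inj]
    exact ⟨congrArg (·.1.1) hXY, congrArg (·.2.1.1) hXY, congrArg (·.2.2.1.1) hXY,
      congrArg (·.2.2.2.1) hXY⟩
  simpa using LinearMap.finrank_le_finrank_of_injective hΦ

theorem finrank_intertwiners_blockDiagHom_neg_le (e : κ ⊕ μ ≃ ι) {N : Matrix κ κ F}
    {B : Matrix μ μ F} (hN : IsNilpotent N) (hB : IsUnit B) :
    finrank F (intertwiners (blockDiagHom e (N, B)) (-blockDiagHom e (N, B))) ≤
      finrank F (intertwiners N (-N)) + finrank F (intertwiners B (-B)) := by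
  have h := finrank_intertwiners_blockDiagHom_le e (N, B) (-N, -B)
  rwa [blockDiagHom_neg, intertwiners_eq_bot_of_isNilpotent_left hN hB.neg,
    intertwiners_eq_bot_of_isNilpotent_right hB hN.neg, finrank_bot, finrank_bot, zero_add,
    zero_add] at h

end BlocksField

theorem exists_linearEquiv_pi_quotient_of_isTorsion {R M ι : Type*} [CommRing R] [IsDomain R]
    [IsPrincipalIdealRing R] [AddCommGroup M] [Module R M] [Finite ι] (hM : IsTorsion R M)
    {v : ι → M} (hv : Submodule.span R (Set.range v) = ⊤) :
    ∃ I : ι → Ideal R, Nonempty (M ≃ₗ[R] ∀ i, R ⧸ I i) := by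
  have := Fintype.ofFinite ι
  let π := Fintype.linearCombination R v
  have hπ : Function.Surjective π := by
    rw [← LinearMap.range_eq_top, Fintype.range_linearCombination, hv]
  have : Module.Finite R M := .of_surjective π hπ
  let e := π.quotKerEquivOfSurjective hπ
  have hker : finrank R (LinearMap.ker π) = finrank R (ι → R) := by
    rw [← Submodule.finrank_quotient_add_finrank (LinearMap.ker π), e.finrank_eq,
      finrank_eq_zero_iff_isTorsion.2 hM, zero_add]
  exact ⟨_, ⟨e.symm.trans (Submodule.quotientEquivPiSpan _ (Pi.basisFun R ι) hker)⟩⟩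

section CyclicDecomposition

variable {F : Type*} [Field F] {ι : Type*} [Fintype ι] [DecidableEq ι]

/-- The `F[X]`-module attached to `A`, in which `X` acts on `ι → F` as `A`, is the sum of the cyclic
modules `F[X] ⧸ I i`. The ideals are only required to be as many as the size of `A`; they are
neither ordered by divisibility nor proper. -/
def HasCyclicDecomposition (A : Matrix ι ι F) (I : ι → Ideal F[X]) : Prop :=
  Nonempty (AEval' (toLin' A) ≃ₗ[F[X]] ∀ i, F[X] ⧸ I i)

theorem exists_hasCyclicDecomposition (A : Matrix ι ι F) : ∃ I, HasCyclicDecomposition A I := by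
  let b := (Pi.basisFun F ι).map (AEval'.of (toLin' A))
  refine exists_linearEquiv_pi_quotient_of_isTorsion
    (AEval.isTorsion_of_finiteDimensional F (ι → F) (toLin' A)) (v := b) ?_
  refine eq_top_iff.2 fun m _ => Submodule.span_le_restrictScalars F F[X] _ ?_
  rw [b.span_eq]
  trivial

theorem HasCyclicDecomposition.exists_linearEquiv {A : Matrix ι ι F} {I : ι → Ideal F[X]}
    (h : HasCyclicDecomposition A I) :
    ∃ e : (ι → F) ≃ₗ[F] ∀ i, F[X] ⧸ I i, ∀ v, e (A *ᵥ v) = (X : F[X]) • e v := by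
  obtain ⟨e⟩ := h
  refine ⟨(AEval'.of (toLin' A)).trans (e.restrictScalars F), fun v => ?_⟩
  rw [LinearEquiv.trans_apply, LinearEquiv.trans_apply, LinearEquiv.restrictScalars_apply,
    LinearEquiv.restrictScalars_apply, ← map_smul, AEval'.X_smul_of, toLin'_apply]

theorem HasCyclicDecomposition.mem_of_aeval_eq_zero {A : Matrix ι ι F} {I : ι → Ideal F[X]}
    (h : HasCyclicDecomposition A I) {p : F[X]} (hp : aeval A p = 0) (i : ι) : p ∈ I i := by
  obtain ⟨e⟩ := h
  have hp' : aeval (toLin' A) p = 0 := by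
    change aeval (toLinAlgEquiv' A) p = 0
    rw [aeval_algHom_apply, hp, map_zero]
  have hsmul (m : AEval' (toLin' A)) : p • m = 0 := by
    obtain ⟨v, rfl⟩ := (AEval'.of (toLin' A)).surjective m
    rw [← AEval.of_aeval_smul, hp', zero_smul, map_zero]
  have hone : p • (1 : ∀ i, F[X] ⧸ I i) = 0 := by
    rw [← e.apply_symm_apply 1, ← map_smul, hsmul, map_zero]
  rw [← Ideal.Quotient.eq_zero_iff_mem, ← mul_one p]
  exact congrFun hone i

theorem isConj_of_linearEquiv {A B : Matrix ι ι F} (e : (ι → F) ≃ₗ[F] (ι → F))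
    (h : ∀ v, e (A *ᵥ v) = B *ᵥ e v) : IsConj A B := by
  refine ⟨⟨LinearMap.toMatrix' e, LinearMap.toMatrix' e.symm, ?_, ?_⟩, ?_⟩
  · rw [← LinearMap.toMatrix'_comp, e.comp_symm, LinearMap.toMatrix'_id]
  · rw [← LinearMap.toMatrix'_comp, e.symm_comp, LinearMap.toMatrix'_id]
  · refine toLin'.injective (LinearMap.ext fun v => ?_)
    simp only [toLin'_mul, toLin'_toMatrix']
    simp [h]

theorem HasCyclicDecomposition.isConj {A B : Matrix ι ι F} {I : ι → Ideal F[X]}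
    (hA : HasCyclicDecomposition A I) (hB : HasCyclicDecomposition B I) : IsConj A B := by
  obtain ⟨e, he⟩ := hA.exists_linearEquiv
  obtain ⟨f, hf⟩ := hB.exists_linearEquiv
  exact isConj_of_linearEquiv (e.trans f.symm) fun v => f.injective (by simp [he, hf])

omit [DecidableEq ι] in
theorem card_le_finrank_intertwiners_self (A : Matrix ι ι F) :
    Fintype.card ι ≤ finrank F (intertwiners A A) := by
  classical
  obtain ⟨I, hI⟩ := exists_hasCyclicDecomposition A
  obtain ⟨e, he⟩ := hI.exists_linearEquiv
  let Φ : (ι → F) →ₗ[F] Matrix ι ι F := LinearMap.toMatrix'.toLinearMap ∘ₗ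
    (e.symm.conj.toLinearMap ∘ₗ LinearMap.mul F (∀ i, F[X] ⧸ I i)) ∘ₗ e.toLinearMap
  have hΦ_apply (v w : ι → F) : Φ v *ᵥ w = e.symm (e v * e w) := by
    simp [Φ, ← toLin'_apply, LinearEquiv.conj_apply]
  have hΦ_mem (v : ι → F) : Φ v ∈ intertwiners A A := by
    refine mem_intertwiners.2 (toLin'.injective (LinearMap.ext fun w => e.injective ?_))
    simpa [toLin'_mul, hΦ_apply, he, -mulVec_mulVec] using (mul_smul_comm X (e v) (e w)).symm
  have hΦ_inj : Function.Injective (Φ.codRestrict _ hΦ_mem) := fun v w hvw => by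
    have h1 : e v * e (e.symm 1) = e w * e (e.symm 1) := e.symm.injective <| by
      rw [← hΦ_apply, ← hΦ_apply]
      exact congrArg (·.1 *ᵥ e.symm 1) hvw
    simpa using h1
  simpa using LinearMap.finrank_le_finrank_of_injective hΦ_inj

/- When the divisors of `p` are stable under `X ↦ -X`, that substitution acts on every cyclic
summand `F[X] ⧸ I i` and exchanges multiplication by `X` and by `-X`. -/
theorem isConj_neg_of_forall_dvd {A : Matrix ι ι F} {p : F[X]} (hp : aeval A p = 0)
    (h : ∀ d, d ∣ p → Associated (algEquivAevalNegX d) d) : IsConj A (-A) := by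
  obtain ⟨I, hI⟩ := exists_hasCyclicDecomposition A
  obtain ⟨e, he⟩ := hI.exists_linearEquiv
  have hmap (i : ι) : I i = (I i).map (algEquivAevalNegX : F[X] ≃ₐ[F] F[X]) := by
    obtain ⟨d, hd⟩ := IsPrincipalIdealRing.principal (I i)
    have hdp : d ∣ p := Ideal.mem_span_singleton.1 <| by
      rw [Ideal.span, ← hd]
      exact hI.mem_of_aeval_eq_zero hp i
    rw [hd, ← Ideal.span, Ideal.map_span, Set.image_singleton]
    exact (Ideal.span_singleton_eq_span_singleton.2 (h d hdp)).symm
  let θ (i : ι) := Ideal.quotientEquivAlg (I i) (I i) algEquivAevalNegX (hmap i)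
  have hθ (i : ι) (x : F[X] ⧸ I i) : θ i ((X : F[X]) • x) = -((X : F[X]) • θ i x) := by
    obtain ⟨g, rfl⟩ := Ideal.Quotient.mk_surjective x
    change Ideal.Quotient.mk (I i) (algEquivAevalNegX (X * g)) =
      -Ideal.Quotient.mk (I i) (X * algEquivAevalNegX g)
    simp
  let Θ := LinearEquiv.piCongrRight fun i => (θ i).toLinearEquiv
  refine isConj_of_linearEquiv ((e.trans Θ).trans e.symm) fun v => e.injective ?_
  rw [neg_mulVec, map_neg, he]
  simp only [LinearEquiv.trans_apply, LinearEquiv.apply_symm_apply, he]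
  exact funext fun i => hθ i _

theorem isConj_neg_of_isNilpotent {A : Matrix ι ι F} (hA : IsNilpotent A) : IsConj A (-A) := by
  obtain ⟨k, hk⟩ := hA
  refine isConj_neg_of_forall_dvd (p := X ^ k) (by simpa) fun d hd => ?_
  obtain ⟨j, -, hj⟩ := (dvd_prime_pow prime_X k).1 hd
  refine (hj.map algEquivAevalNegX).trans (Associated.trans ?_ hj.symm)
  simpa using (Associated.neg_left (Associated.refl (X : F[X]))).pow_pow

theorem isConj_neg_of_sq_eq_scalar {A : Matrix ι ι F} {c : F} (hc : ¬ IsSquare c)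
    (hA : A ^ 2 = scalar ι c) : IsConj A (-A) := by
  have hirr : Irreducible ((X : F[X]) ^ 2 - C c) :=
    (X_pow_sub_C_irreducible_iff_of_prime Nat.prime_two).2 fun b hb => hc ⟨b, by rw [← hb, sq]⟩
  have haeval : aeval A (X ^ 2 - C c : F[X]) = 0 := by simp [hA, Matrix.algebraMap_eq_diagonal]
  refine isConj_neg_of_forall_dvd haeval fun d hd => ?_
  rcases hirr.dvd_iff.1 hd with hu | ha
  · exact (associated_one_iff_isUnit.2 (hu.map algEquivAevalNegX)).trans
      (associated_one_iff_isUnit.2 hu).symm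
  · refine (ha.symm.map algEquivAevalNegX).trans (Associated.trans ?_ ha)
    simp

end CyclicDecomposition

section FittingDecomposition

variable {F : Type*} [Field F] {ι κ μ : Type*} [Fintype ι] [Fintype κ] [Fintype μ]
  [DecidableEq ι] [DecidableEq κ] [DecidableEq μ]

theorem isConj_toMatrix (b : Basis ι F (ι → F)) (f : End F (ι → F)) :
    IsConj (LinearMap.toMatrix b b f) (LinearMap.toMatrix' f) := by
  refine isConj_of_linearEquiv b.equivFun.symm fun v => b.equivFun.injective ?_
  obtain ⟨w, rfl⟩ := b.equivFun.surjective v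
  rw [LinearEquiv.apply_symm_apply, LinearEquiv.symm_apply_apply, ← toLin'_apply (M := f.toMatrix'),
    toLin'_toMatrix']
  exact LinearMap.toMatrix_mulVec_repr b b f w

theorem isConj_blockDiagHom_of_isCompl {f : End F (ι → F)} {V W : Submodule F (ι → F)}
    (h : IsCompl V W) (hV : ∀ x ∈ V, f x ∈ V) (hW : ∀ x ∈ W, f x ∈ W)
    (b₁ : Basis κ F V) (b₂ : Basis μ F W) (e : κ ⊕ μ ≃ ι) :
    IsConj (blockDiagHom e (LinearMap.toMatrix b₁ b₁ (f.restrict hV),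
      LinearMap.toMatrix b₂ b₂ (f.restrict hW))) (LinearMap.toMatrix' f) := by
  let E := Submodule.prodEquivOfIsCompl V W h
  let b := ((b₁.prod b₂).map E).reindex e
  have hE (p : V × W) : f (E p) = E (f.restrict hV p.1, f.restrict hW p.2) := by
    simp [E, LinearMap.restrict_apply]
  have hb (j : κ ⊕ μ) : b (e j) = E (b₁.prod b₂ j) := by simp [b]
  convert isConj_toMatrix b f
  ext i j
  obtain ⟨i, rfl⟩ := e.surjective i
  obtain ⟨j, rfl⟩ := e.surjective j
  rw [LinearMap.toMatrix_apply, hb, hE]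
  simp only [b, Basis.repr_reindex, Basis.map_repr, LinearEquiv.trans_apply,
    LinearEquiv.symm_apply_apply, Finsupp.mapDomain_equiv_apply, Equiv.symm_apply_apply]
  refine (congrFun₂ (submatrix_blockDiagHom e _) i j).trans ?_
  rcases i with i | i <;> rcases j with j | j <;> simp [LinearMap.toMatrix_apply]

theorem isNilpotent_restrict_ker_pow {M : Type*} [AddCommGroup M] [Module F M] (f : End F M)
    (j : ℕ) (h : ∀ x ∈ LinearMap.ker (f ^ j), f x ∈ LinearMap.ker (f ^ j)) :
    IsNilpotent (f.restrict h) := by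
  refine ⟨j, LinearMap.ext fun x => Subtype.ext ?_⟩
  rw [Module.End.pow_restrict j h fun y hy => by rw [LinearMap.mem_ker.1 hy]; exact zero_mem _]
  exact x.2

theorem isUnit_restrict_of_disjoint_ker {M : Type*} [AddCommGroup M] [Module F M]
    {f : End F M} {W : Submodule F M} [FiniteDimensional F W] (h : ∀ x ∈ W, f x ∈ W)
    (hW : Disjoint (LinearMap.ker f) W) : IsUnit (f.restrict h) := by
  refine LinearMap.isUnit_iff_ker_eq_bot _ |>.2 (LinearMap.ker_eq_bot'.2 fun x hx => ?_)
  exact Subtype.ext (Submodule.disjoint_def.1 hW x (congrArg Subtype.val hx) x.2)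

theorem exists_isConj_blockDiagHom (A : Matrix ι ι F) :
    ∃ k m : ℕ, k + m = Fintype.card ι ∧ ∀ e : Fin k ⊕ Fin m ≃ ι,
      ∃ N B, IsNilpotent N ∧ IsUnit B ∧ IsConj (blockDiagHom e (N, B)) A := by
  let f : End F (ι → F) := toLin' A
  obtain ⟨j, hj⟩ := Filter.eventually_atTop.1 f.eventually_isCompl_ker_pow_range_pow
  have hc := hj (j + 1) j.le_succ
  set V := LinearMap.ker (f ^ (j + 1)) with hV_def
  set W := LinearMap.range (f ^ (j + 1))
  have hcomm (x : ι → F) : f ((f ^ (j + 1)) x) = (f ^ (j + 1)) (f x) :=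
    LinearMap.congr_fun ((Commute.refl f).pow_right (j + 1)) x
  have hV : ∀ x ∈ V, f x ∈ V := fun x hx => by
    rw [hV_def, LinearMap.mem_ker] at hx ⊢
    rw [← hcomm, hx, map_zero]
  have hW : ∀ x ∈ W, f x ∈ W := by
    rintro _ ⟨y, rfl⟩
    exact ⟨f y, (hcomm y).symm⟩
  have hker : LinearMap.ker f ≤ V := by
    rw [hV_def, pow_succ]
    exact LinearMap.ker_le_ker_comp f (f ^ j)
  let b₁ := finBasis F V
  let b₂ := finBasis F W
  refine ⟨finrank F V, finrank F W, ?_, fun e => ⟨LinearMap.toMatrixAlgEquiv b₁ (f.restrict hV),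
    LinearMap.toMatrixAlgEquiv b₂ (f.restrict hW), ?_, ?_, ?_⟩⟩
  · rw [Submodule.finrank_add_eq_of_isCompl hc, finrank_fintype_fun_eq_card]
  · exact (isNilpotent_restrict_ker_pow f (j + 1) hV).map (LinearMap.toMatrixAlgEquiv b₁)
  · exact (isUnit_restrict_of_disjoint_ker hW (hc.disjoint.mono_left hker)).map
      (LinearMap.toMatrixAlgEquiv b₂)
  · rw [← LinearMap.toMatrix'_toLin' A]
    exact isConj_blockDiagHom_of_isCompl hc hV hW b₁ b₂ e

end FittingDecomposition

section DimensionBounds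

variable {F : Type*} [Field F] {ι κ μ : Type*} [Fintype ι] [Fintype κ] [Fintype μ]
  [DecidableEq ι] [DecidableEq κ] [DecidableEq μ]

theorem finrank_intertwiners_neg_add_card_le (h2 : (2 : F) ≠ 0) {B : Matrix ι ι F}
    (hB : IsUnit B) :
    finrank F (intertwiners B (-B)) + Fintype.card ι ≤ Fintype.card ι ^ 2 := by
  have h := finrank_intertwiners_self_add_neg h2 hB
  have hle := (intertwiners (B ^ 2) (B ^ 2)).finrank_le
  rw [finrank_matrix_self, ← sq] at hle
  have := card_le_finrank_intertwiners_self B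
  omega

theorem finrank_intertwiners_neg_add_three_mul_card_le (h2 : (2 : F) ≠ 0) {B : Matrix ι ι F}
    (hB : IsUnit B) (hs : B ^ 2 ∉ Set.range (scalar ι)) :
    finrank F (intertwiners B (-B)) + 3 * Fintype.card ι ≤ Fintype.card ι ^ 2 + 2 := by
  have h := finrank_intertwiners_self_add_neg h2 hB
  have hle := finrank_intertwiners_add_card_le hs hs
  have := card_le_finrank_intertwiners_self B
  rw [← sq] at hle
  omega

theorem isCompl_eigenspace_neg {M : Type*} [AddCommGroup M] [Module F M] (h2 : (2 : F) ≠ 0)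
    {f : End F M} {a : F} (ha : a ≠ 0) (hf : ∀ x, f (f x) = (a * a) • x) :
    IsCompl (f.eigenspace a) (f.eigenspace (-a)) := by
  have h2a : 2 * a ≠ 0 := mul_ne_zero h2 ha
  have hne : a ≠ -a := fun h => h2a (by rw [two_mul, add_eq_zero_iff_eq_neg, ← h])
  refine ⟨Module.End.disjoint_genEigenspace f hne 1 1,
    codisjoint_iff.2 (eq_top_iff.2 fun x _ => ?_)⟩
  refine Submodule.mem_sup.2 ⟨(2 * a)⁻¹ • (a • x + f x), ?_, (2 * a)⁻¹ • (a • x - f x), ?_, ?_⟩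
  · rw [Module.End.mem_eigenspace_iff, map_smul, map_add, map_smul, hf]
    module
  · rw [Module.End.mem_eigenspace_iff, map_smul, map_sub, map_smul, hf]
    module
  · rw [← smul_add, add_add_sub_cancel, ← two_smul F (a • x), smul_smul 2, smul_smul,
      inv_mul_cancel₀ h2a, one_smul]

theorem exists_isConj_blockDiagHom_scalar (h2 : (2 : F) ≠ 0) {a : F} (ha : a ≠ 0)
    {B : Matrix ι ι F} (hB : B ^ 2 = scalar ι (a * a)) :
    ∃ k m : ℕ, k + m = Fintype.card ι ∧ ∀ e : Fin k ⊕ Fin m ≃ ι,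
      IsConj (blockDiagHom e (scalar (Fin k) a, -scalar (Fin m) a)) B := by
  have hf (x : ι → F) : toLin' B (toLin' B x) = (a * a) • x := by
    rw [toLin'_apply, toLin'_apply, mulVec_mulVec, ← sq, hB]
    simp
  have hmem (c : F) : ∀ x ∈ End.eigenspace (toLin' B) c, toLin' B x ∈ End.eigenspace (toLin' B) c :=
    fun x hx => by
      rw [End.mem_eigenspace_iff.1 hx]
      exact Submodule.smul_mem _ c hx
  have hrestrict (c : F) : (toLin' B).restrict (hmem c) = c • LinearMap.id :=
    LinearMap.ext fun x => Subtype.ext (End.mem_eigenspace_iff.1 x.2)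
  have hc := isCompl_eigenspace_neg h2 ha hf
  refine ⟨_, _, (Submodule.finrank_add_eq_of_isCompl hc).trans (finrank_fintype_fun_eq_card F),
    fun e => ?_⟩
  have hconj := isConj_blockDiagHom_of_isCompl hc (hmem a) (hmem (-a)) (finBasis F _)
    (finBasis F _) e
  rwa [hrestrict, hrestrict, map_smul, map_smul, LinearMap.toMatrix_id, LinearMap.toMatrix_id,
    LinearMap.toMatrix'_toLin', neg_smul, smul_one_eq_diagonal, smul_one_eq_diagonal] at hconj

theorem finrank_intertwiners_self_add_neg_of_sq_eq_scalar (h2 : (2 : F) ≠ 0) {c : F} (hc : c ≠ 0)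
    {B : Matrix ι ι F} (hB : B ^ 2 = scalar ι c) :
    finrank F (intertwiners B B) + finrank F (intertwiners B (-B)) = Fintype.card ι ^ 2 := by
  have hunit : IsUnit B := by
    refine (isUnit_pow_iff two_ne_zero).1 (hB ▸ ?_)
    exact (isUnit_iff_ne_zero.2 hc).map (scalar ι)
  have htop : intertwiners (B ^ 2) (B ^ 2) = ⊤ :=
    eq_top_iff.2 fun X _ => mem_intertwiners.2 (by rw [hB]; exact scalar_commute c (.all c) X)
  rw [finrank_intertwiners_self_add_neg h2 hunit, htop, finrank_top, finrank_matrix_self, sq]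

theorem two_mul_finrank_intertwiners_neg_le (h2 : (2 : F) ≠ 0) {c : F} (hc : c ≠ 0)
    {B : Matrix ι ι F} (hB : B ^ 2 = scalar ι c) :
    2 * finrank F (intertwiners B (-B)) ≤ Fintype.card ι ^ 2 := by
  by_cases hsq : IsSquare c
  · obtain ⟨a, rfl⟩ := hsq
    have ha : a ≠ 0 := left_ne_zero_of_mul hc
    obtain ⟨k, m, hkm, hconj⟩ := exists_isConj_blockDiagHom_scalar h2 ha hB
    have e : Fin k ⊕ Fin m ≃ ι := Fintype.equivOfCardEq (by simpa using hkm)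
    have hle := finrank_intertwiners_blockDiagHom_le e (scalar (Fin k) a, -scalar (Fin m) a)
      (-scalar (Fin k) a, - -scalar (Fin m) a)
    have h_bot : finrank F (intertwiners (-scalar (Fin m) a) (- -scalar (Fin m) a)) = 0 := by
      rw [← map_neg, intertwiners_scalar_neg_eq_bot h2 (neg_ne_zero.2 ha), finrank_bot]
    have h₁₂ := (intertwiners (scalar (Fin k) a) (- -scalar (Fin m) a)).finrank_le
    have h₂₁ := (intertwiners (-scalar (Fin m) a) (-scalar (Fin k) a)).finrank_le
    rw [finrank_matrix, Fintype.card_fin, Fintype.card_fin, finrank_self] at h₁₂ h₂₁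
    rw [blockDiagHom_neg, finrank_intertwiners_eq_of_isConj (hconj e)
      ((hconj e).imp fun _ h => h.neg_right), h_bot,
      intertwiners_scalar_neg_eq_bot h2 ha, finrank_bot] at hle
    rw [← hkm]
    nlinarith [sq_nonneg ((k : ℤ) - m)]
  · have hle := finrank_intertwiners_self_add_neg_of_sq_eq_scalar h2 hc hB
    rw [finrank_intertwiners_eq_of_isConj (IsConj.refl B) (isConj_neg_of_sq_eq_scalar hsq hB),
      ← two_mul] at hle
    exact hle.le

theorem two_mul_card_add_three_mul_finrank_intertwiners_neg_le (h2 : (2 : F) ≠ 0)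
    (hι : 3 ≤ Fintype.card ι) {c : F} (hc : c ≠ 0) {B : Matrix ι ι F} (hB : B ^ 2 = scalar ι c) :
    2 * Fintype.card ι + 3 * finrank F (intertwiners B (-B)) ≤
      Fintype.card ι ^ 2 + 2 * finrank F (intertwiners B B) := by
  have hsum := finrank_intertwiners_self_add_neg_of_sq_eq_scalar h2 hc hB
  have hle := two_mul_finrank_intertwiners_neg_le h2 hc hB
  rcases hι.eq_or_lt with h | h
  · rw [← h] at hsum hle ⊢
    omega
  · nlinarith

theorem finrank_intertwiners_blockDiagHom_neg_add_le (h2 : (2 : F) ≠ 0) (e : κ ⊕ μ ≃ ι)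
    {N : Matrix κ κ F} {B : Matrix μ μ F} (hN : IsNilpotent N) (hB : IsUnit B)
    (h0 : blockDiagHom e (N, B) ≠ 0)
    (hs : ∀ c, c ≠ 0 → blockDiagHom e (N, B) ^ 2 ≠ scalar ι c) :
    finrank F (intertwiners (blockDiagHom e (N, B)) (-blockDiagHom e (N, B))) +
      2 * Fintype.card ι + Fintype.card μ ≤ Fintype.card ι ^ 2 + 2 := by
  have hcard : Fintype.card ι = Fintype.card κ + Fintype.card μ := by
    rw [← Fintype.card_congr e, Fintype.card_sum]
  rcases isEmpty_or_nonempty μ with hμ | hμ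
  · simpa using finrank_intertwiners_neg_add_le h2 h0
  rcases isEmpty_or_nonempty κ with hκ | hκ
  · rw [Fintype.card_eq_zero (α := κ), zero_add] at hcard
    have hA : IsUnit (blockDiagHom e (N, B)) :=
      (Prod.isUnit_iff.2 ⟨isUnit_of_subsingleton N, hB⟩).map (blockDiagHom e)
    have : Nonempty ι := e.nonempty_congr.1 inferInstance
    have := finrank_intertwiners_neg_add_three_mul_card_le h2 hA fun ⟨c, hc⟩ =>
      hs c (fun h => (hA.pow 2).ne_zero (by rw [← hc, h, map_zero])) hc.symm
    omega
  · have hle := finrank_intertwiners_blockDiagHom_neg_le e hN hB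
    have hleN := (intertwiners N (-N)).finrank_le
    have hleB := finrank_intertwiners_neg_add_card_le h2 hB
    rw [finrank_matrix_self] at hleN
    have hκ' : 1 ≤ Fintype.card κ := Fintype.card_pos
    have hμ' : 1 ≤ Fintype.card μ := Fintype.card_pos
    rw [hcard]
    nlinarith

end DimensionBounds

section Units

theorem ncard_spectrum_le {F E : Type*} [Field F] [Ring E] [Algebra F E] [FiniteDimensional F E]
    (x : E) : (spectrum F x).ncard ≤ finrank F E := by
  cases subsingleton_or_nontrivial E
  · rw [spectrum.of_subsingleton, Set.ncard_empty]
    exact zero_le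
  have hsub : spectrum F x ⊆ (minpoly F x).rootSet F := fun t ht => by
    refine (mem_rootSet_of_ne (minpoly.ne_zero (Algebra.IsIntegral.isIntegral x))).2 ?_
    have h := spectrum.subset_polynomial_aeval x (minpoly F x) ⟨t, ht, rfl⟩
    rwa [minpoly.aeval, spectrum.zero_eq] at h
  calc (spectrum F x).ncard ≤ ((minpoly F x).rootSet F).ncard :=
        Set.ncard_le_ncard hsub (rootSet_finite _ F)
    _ ≤ (minpoly F x).natDegree := ncard_rootSet_le _ F
    _ ≤ finrank F E := minpoly.natDegree_le x

/- Among the `q` translates `t - x` of any `x`, at least half are units. -/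
theorem card_le_two_mul_card_units {F E : Type*} [Field F] [Finite F] [Ring E] [Algebra F E]
    [FiniteDimensional F E] (hq : 2 * finrank F E ≤ Nat.card F) :
    Nat.card E ≤ 2 * Nat.card Eˣ := by
  classical
  have : Finite E := Module.finite_of_finite F
  have := Fintype.ofFinite F
  have := Fintype.ofFinite E
  have hle := Finset.card_mul_le_card_mul (fun (x : E) (t : F) => IsUnit (algebraMap F E t - x))
    (s := Finset.univ) (t := Finset.univ) (m := Nat.card F - finrank F E) (n := Nat.card Eˣ)
    (fun x _ => ?_) (fun t _ => ?_)
  · rw [Finset.card_univ, Finset.card_univ, ← Nat.card_eq_fintype_card,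
      ← Nat.card_eq_fintype_card] at hle
    have hq' : Nat.card F ≤ 2 * (Nat.card F - finrank F E) := by omega
    nlinarith [Nat.card_pos (α := F)]
  · have hspec : #{t : F | ¬IsUnit (algebraMap F E t - x)} ≤ finrank F E := by
      rw [← Set.ncard_coe_finset, Finset.coe_filter_univ]
      exact ncard_spectrum_le x
    have := Finset.card_filter_add_card_filter_not (s := Finset.univ)
      fun t : F => IsUnit (algebraMap F E t - x)
    rw [Finset.card_univ, ← Nat.card_eq_fintype_card] at this
    exact Nat.sub_le_of_le_add (this.ge.trans (Nat.add_le_add_left hspec _))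
  · rw [Nat.card_eq_fintype_card, ← Finset.card_univ]
    refine Finset.card_le_card_of_surjOn (fun u : Eˣ => algebraMap F E t - u) fun x hx => ?_
    obtain ⟨u, hu⟩ := (Finset.mem_filter.1 hx).2
    exact ⟨u, Finset.mem_coe.2 (Finset.mem_univ u), by simp [hu]⟩

end Units

section Orbits

variable {L M : Type*} [Monoid L] [Monoid M]

theorem card_units_le_card_filter_conj [Fintype Mˣ] [DecidableEq M] {φ : L →* M}
    (hφ : Function.Injective φ) {S : Finset L} (hS : ∀ z ∈ S, ∀ u : Lˣ, u * z * (u⁻¹ : Lˣ) ∈ S)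
    {y : M} {z : L} (hz : z ∈ S) (hy : IsConj (φ z) y) :
    Nat.card Lˣ ≤ #{p ∈ S ×ˢ (Finset.univ : Finset Mˣ) | p.2 * φ p.1 * (p.2⁻¹ : Mˣ) = y} := by
  obtain ⟨g, hg⟩ := hy
  rw [← Fintype.card_coe, ← Nat.card_eq_fintype_card]
  let v (u : Lˣ) : Mˣ := g * (Units.map φ u)⁻¹
  refine Nat.card_le_card_of_injective (fun u => ⟨(u * z * (u⁻¹ : Lˣ), v u), ?_⟩) fun u w h => ?_
  · refine Finset.mem_filter.2 ⟨Finset.mk_mem_product (hS z hz u) (Finset.mem_univ _), ?_⟩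
    have hφu : φ ↑u⁻¹ * φ u = 1 := by rw [← map_mul, u.inv_mul, map_one]
    calc (v u : M) * φ (u * z * (u⁻¹ : Lˣ)) * ((v u)⁻¹ : Mˣ)
        = g * (φ ↑u⁻¹ * φ u) * φ z * (φ ↑u⁻¹ * φ u) * (g⁻¹ : Mˣ) := by
          simp [v, mul_assoc]
      _ = y := by rw [hφu, mul_one, mul_one, hg.eq, mul_assoc, g.mul_inv, mul_one]
  · have hv : v u = v w := congrArg (·.1.2) h
    exact Units.map_injective hφ (inv_injective (mul_left_cancel hv))

theorem card_units_mul_sum_le [Finite Mˣ] {φ : L →* M} (hφ : Function.Injective φ) {S : Finset L}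
    (hS : ∀ z ∈ S, ∀ u : Lˣ, u * z * (u⁻¹ : Lˣ) ∈ S) {T : Finset M}
    (hT : ∀ y ∈ T, ∃ z ∈ S, IsConj (φ z) y) {f : M → ℕ} (hf : ∀ x y, IsConj x y → f x = f y) :
    Nat.card Lˣ * ∑ y ∈ T, f y ≤ Nat.card Mˣ * ∑ z ∈ S, f (φ z) := by
  classical
  have := Fintype.ofFinite Mˣ
  let c (p : L × Mˣ) : M := p.2 * φ p.1 * (p.2⁻¹ : Mˣ)
  calc Nat.card Lˣ * ∑ y ∈ T, f y
      ≤ ∑ y ∈ T, ∑ p ∈ S ×ˢ (Finset.univ : Finset Mˣ) with c p = y, f (c p) := by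
        rw [Finset.mul_sum]
        refine Finset.sum_le_sum fun y hy => ?_
        obtain ⟨z, hz, hzy⟩ := hT y hy
        rw [Finset.sum_congr rfl fun p hp => by rw [(Finset.mem_filter.1 hp).2],
          Finset.sum_const, smul_eq_mul]
        exact Nat.mul_le_mul_right _ (card_units_le_card_filter_conj hφ hS hz hzy)
    _ ≤ ∑ p ∈ S ×ˢ (Finset.univ : Finset Mˣ), f (c p) := by
        rw [Finset.sum_fiberwise_eq_sum_filter _ _ c fun p => f (c p)]
        exact Finset.sum_le_sum_of_subset (Finset.filter_subset _ _)
    _ = ∑ z ∈ S, ∑ _g : Mˣ, f (φ z) := by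
        rw [Finset.sum_product]
        exact Finset.sum_congr rfl fun z _ => Finset.sum_congr rfl fun g _ =>
          (hf _ _ ⟨g, by simp [c, SemiconjBy, mul_assoc]⟩).symm
    _ = Nat.card Mˣ * ∑ z ∈ S, f (φ z) := by
        simp [Finset.mul_sum, Nat.card_eq_fintype_card]

end Orbits

theorem exists_finset_forall_mem_ideal {F : Type*} [Field F] {p : F[X]} (hp : p ≠ 0) :
    ∃ s : Finset (Ideal F[X]), #s ≤ 2 ^ p.natDegree ∧ ∀ I : Ideal F[X], p ∈ I → I ∈ s := by
  classical
  open UniqueFactorizationMonoid in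
  refine ⟨(normalizedFactors p).powerset.toFinset.image fun t => Ideal.span {t.prod}, ?_,
    fun I hI => ?_⟩
  · refine Finset.card_image_le.trans ((Multiset.toFinset_card_le _).trans ?_)
    rw [Multiset.card_powerset]
    refine Nat.pow_le_pow_right two_pos ?_
    rw [natDegree_eq_of_degree_eq
      (degree_eq_degree_of_associated (prod_normalizedFactors hp).symm),
      natDegree_multiset_prod _ (zero_notMem_normalizedFactors p)]
    simpa using Multiset.card_nsmul_le_sum (s := (normalizedFactors p).map natDegree) (a := 1)
      (Multiset.forall_mem_map_iff.2 fun q hq =>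
        (irreducible_of_normalized_factor q hq).natDegree_pos)
  · obtain ⟨d, rfl⟩ := IsPrincipalIdealRing.principal I
    have hdp : d ∣ p := Ideal.mem_span_singleton.1 hI
    have hd : d ≠ 0 := ne_zero_of_dvd_ne_zero hp hdp
    refine Finset.mem_image.2 ⟨normalizedFactors d, ?_, ?_⟩
    · rw [Multiset.mem_toFinset, Multiset.mem_powerset]
      exact (dvd_iff_normalizedFactors_le_normalizedFactors hd hp).1 hdp
    · exact Ideal.span_singleton_eq_span_singleton.2 (prod_normalizedFactors hd)

section ClassSums

variable {F : Type*} [Field F] {ι : Type*} [Fintype ι] [DecidableEq ι]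

theorem sum_le_of_forall_aeval_eq_zero {p : F[X]} (hp : p ≠ 0) {S : Finset (Matrix ι ι F)}
    (hS : ∀ A ∈ S, aeval A p = 0) {f : Matrix ι ι F → ℕ} {b : ℕ}
    (hf : ∀ T ⊆ S, (∀ A ∈ T, ∀ B ∈ T, IsConj A B) → ∑ A ∈ T, f A ≤ b) :
    ∑ A ∈ S, f A ≤ (2 ^ p.natDegree) ^ Fintype.card ι * b := by
  classical
  obtain ⟨s, hs_card, hs⟩ := exists_finset_forall_mem_ideal hp
  choose I hI using exists_hasCyclicDecomposition (F := F) (ι := ι)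
  have hmaps : ∀ A ∈ S, I A ∈ Fintype.piFinset fun _ : ι => s := fun A hA =>
    Fintype.mem_piFinset.2 fun i => hs _ ((hI A).mem_of_aeval_eq_zero (hS A hA) i)
  calc ∑ A ∈ S, f A = ∑ J ∈ Fintype.piFinset fun _ : ι => s, ∑ A ∈ S with I A = J, f A :=
        (Finset.sum_fiberwise_of_maps_to hmaps f).symm
    _ ≤ #(Fintype.piFinset fun _ : ι => s) * b := by
        refine Finset.sum_le_card_nsmul _ _ _ fun J _ =>
          hf _ (Finset.filter_subset _ _) fun A hA B hB => ?_
        refine (hI A).isConj ?_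
        rw [(Finset.mem_filter.1 hA).2, ← (Finset.mem_filter.1 hB).2]
        exact hI B
    _ ≤ (2 ^ p.natDegree) ^ Fintype.card ι * b := by
        rw [Fintype.card_piFinset, Finset.prod_const, Finset.card_univ]
        gcongr

theorem natCard_matrix (F ι : Type*) [Field F] [Fintype ι] :
    Nat.card (Matrix ι ι F) = Nat.card F ^ Fintype.card ι ^ 2 := by
  rw [Module.natCard_eq_pow_finrank (K := F), finrank_matrix_self, sq]

theorem toSubmodule_centralizer_singleton (A : Matrix ι ι F) :
    Subalgebra.toSubmodule (Subalgebra.centralizer F {A}) = intertwiners A A := by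
  ext X
  simp [Subalgebra.mem_centralizer_iff]

theorem natCard_centralizer_singleton (A : Matrix ι ι F) :
    Nat.card (Subalgebra.centralizer F {A}) = Nat.card F ^ finrank F (intertwiners A A) := by
  rw [← toSubmodule_centralizer_singleton, ← Module.natCard_eq_pow_finrank]
  rfl

variable [Finite F]

/- The conjugates of `A` are counted by cosets of the unit group of its centralizer. -/
theorem sum_pow_finrank_intertwiners_self_le_of_isConj
    (hq : 2 * Fintype.card ι ^ 2 ≤ Nat.card F) {T : Finset (Matrix ι ι F)}
    (hT : ∀ A ∈ T, ∀ B ∈ T, IsConj A B) :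
    ∑ A ∈ T, Nat.card F ^ finrank F (intertwiners A A) ≤
      2 * Nat.card F ^ Fintype.card ι ^ 2 := by
  rcases T.eq_empty_or_nonempty with rfl | ⟨A, hA⟩
  · simp
  let L := Subalgebra.centralizer F {A}
  have hL : 2 * finrank F L ≤ Nat.card F := by
    refine le_trans (Nat.mul_le_mul_left 2 ?_) hq
    rw [sq, ← finrank_matrix_self ι ι F]
    exact (Subalgebra.toSubmodule L).finrank_le
  let a : L := ⟨A, by simp [L, Subalgebra.mem_centralizer_iff]⟩
  have ha (z : L) : z * a = a * z :=
    Subtype.ext (Subalgebra.mem_centralizer_iff F |>.1 z.2 A rfl).symm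
  have hsum := card_units_mul_sum_le (φ := L.val.toMonoidHom) Subtype.val_injective (S := {a})
    (by simp [ha]) (T := T) (fun B hB => ⟨a, Finset.mem_singleton_self a, hT A hA B hB⟩)
    (f := fun B => Nat.card F ^ finrank F (intertwiners B B))
    (fun B C h => by rw [finrank_intertwiners_eq_of_isConj h h])
  rw [Finset.sum_singleton] at hsum
  change _ ≤ _ * Nat.card F ^ finrank F (intertwiners A A) at hsum
  rw [← natCard_centralizer_singleton] at hsum
  refine Nat.le_of_mul_le_mul_left ?_ (Nat.card_pos (α := Lˣ))
  calc _ ≤ Nat.card (Matrix ι ι F)ˣ * Nat.card L := hsum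
    _ ≤ Nat.card (Matrix ι ι F) * (2 * Nat.card Lˣ) :=
        Nat.mul_le_mul (Nat.card_le_card_of_injective _ Units.val_injective)
          (card_le_two_mul_card_units hL)
    _ = Nat.card Lˣ * (2 * Nat.card F ^ Fintype.card ι ^ 2) := by rw [natCard_matrix]; ring

theorem sum_pow_finrank_intertwiners_self_le_of_aeval_eq_zero
    (hq : 2 * Fintype.card ι ^ 2 ≤ Nat.card F) {p : F[X]} (hp : p ≠ 0) {S : Finset (Matrix ι ι F)}
    (hS : ∀ A ∈ S, aeval A p = 0) :
    ∑ A ∈ S, Nat.card F ^ finrank F (intertwiners A A) ≤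
      (2 ^ p.natDegree) ^ Fintype.card ι * (2 * Nat.card F ^ Fintype.card ι ^ 2) :=
  sum_le_of_forall_aeval_eq_zero hp hS fun _ _ hT =>
    sum_pow_finrank_intertwiners_self_le_of_isConj hq hT

end ClassSums

section Charpoly

theorem charpoly_neg {R ι : Type*} [CommRing R] [Fintype ι] [DecidableEq ι] (A : Matrix ι ι R) :
    (-A).charpoly = (-1) ^ Fintype.card ι * A.charpoly.comp (-X) := by
  have hmatrix : (-A).charmatrix = -(compRingHom (-X : R[X])).mapMatrix A.charmatrix := by
    ext1 i j
    rcases eq_or_ne i j with rfl | hij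
    · simp [charmatrix_apply_eq, add_comm]
    · simp [charmatrix_apply_ne _ _ _ hij]
  rw [charpoly, hmatrix, det_neg, ← RingHom.map_det, coe_compRingHom_apply, charpoly]

theorem coeff_charpoly_neg {R ι : Type*} [CommRing R] [Fintype ι] [DecidableEq ι]
    (A : Matrix ι ι R) (i : ℕ) :
    (-A).charpoly.coeff i = (-1) ^ (Fintype.card ι + i) * A.charpoly.coeff i := by
  have hX : (-X : R[X]) = C (-1) * X := by simp
  have hsign : ((-1) ^ Fintype.card ι : R[X]) = C ((-1) ^ Fintype.card ι) := by simp
  rw [charpoly_neg, hsign, coeff_C_mul, hX, comp_C_mul_X_coeff]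
  ring

theorem charpoly_eq_of_isConj {R ι : Type*} [CommRing R] [Fintype ι] [DecidableEq ι]
    {A B : Matrix ι ι R} (h : IsConj A B) : A.charpoly = B.charpoly := by
  obtain ⟨g, hg⟩ := h
  rw [← charpoly_units_conj g A, ← coe_units_inv, hg.eq, mul_assoc, g.mul_inv, mul_one]

variable {F : Type*} [Field F] {ι : Type*} [Fintype ι] [DecidableEq ι]

theorem coeff_charpoly_eq_zero_of_isConj_neg (h2 : (2 : F) ≠ 0) {A : Matrix ι ι F}
    (hA : IsConj A (-A)) {i : ℕ} (hi : Odd (Fintype.card ι + i)) : A.charpoly.coeff i = 0 := by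
  have h := coeff_charpoly_neg A i
  rw [← charpoly_eq_of_isConj hA, hi.neg_one_pow] at h
  exact (mul_eq_zero.1 (show 2 * A.charpoly.coeff i = 0 by linear_combination h)).resolve_left h2

theorem charpoly_eq_of_isConj_neg (h2 : (2 : F) ≠ 0) {A B : Matrix ι ι F} (hA : IsConj A (-A))
    (hB : IsConj B (-B))
    (h : ∀ j < Fintype.card ι / 2, A.charpoly.coeff (Fintype.card ι - 2 * (j + 1)) =
      B.charpoly.coeff (Fintype.card ι - 2 * (j + 1))) :
    A.charpoly = B.charpoly := by
  refine Polynomial.ext fun i => ?_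
  rcases (Fintype.card ι + i).even_or_odd with heven | hodd
  · rcases lt_trichotomy i (Fintype.card ι) with hi | rfl | hi
    · obtain ⟨t, ht⟩ := heven
      have hj := h (Fintype.card ι - t - 1) (by omega)
      rwa [show Fintype.card ι - 2 * (Fintype.card ι - t - 1 + 1) = i by omega] at hj
    · have hlead (D : Matrix ι ι F) : D.charpoly.coeff (Fintype.card ι) = 1 := by
        rw [← charpoly_natDegree_eq_dim D]
        exact D.charpoly_monic
      rw [hlead, hlead]
    · rw [coeff_eq_zero_of_natDegree_lt, coeff_eq_zero_of_natDegree_lt] <;>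
        rwa [charpoly_natDegree_eq_dim]
  · rw [coeff_charpoly_eq_zero_of_isConj_neg h2 hA hodd,
      coeff_charpoly_eq_zero_of_isConj_neg h2 hB hodd]

theorem pow_card_eq_zero_of_isNilpotent {A : Matrix ι ι F} (hA : IsNilpotent A) :
    A ^ Fintype.card ι = 0 := by
  have h := sub_eq_zero.1 (isNilpotent_charpoly_sub_pow_of_isNilpotent hA).eq_zero
  simpa [h] using aeval_self_charpoly A

end Charpoly

section Moments

variable {F : Type*} [Field F] [Finite F] {ι κ μ : Type*} [Fintype ι] [Fintype κ] [Fintype μ]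
  [DecidableEq ι] [DecidableEq κ] [DecidableEq μ]

theorem sum_pow_finrank_intertwiners_neg_le_of_isNilpotent
    (hq : 2 * Fintype.card ι ^ 2 ≤ Nat.card F) {S : Finset (Matrix ι ι F)}
    (hS : ∀ A ∈ S, IsNilpotent A) :
    ∑ A ∈ S, Nat.card F ^ finrank F (intertwiners A (-A)) ≤
      2 ^ (Fintype.card ι ^ 2 + 1) * Nat.card F ^ Fintype.card ι ^ 2 := by
  calc ∑ A ∈ S, Nat.card F ^ finrank F (intertwiners A (-A))
      = ∑ A ∈ S, Nat.card F ^ finrank F (intertwiners A A) := Finset.sum_congr rfl fun A hA => by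
        rw [finrank_intertwiners_eq_of_isConj (.refl A) (isConj_neg_of_isNilpotent (hS A hA)).symm]
    _ ≤ _ := sum_pow_finrank_intertwiners_self_le_of_aeval_eq_zero hq
        (pow_ne_zero (Fintype.card ι) X_ne_zero) fun A hA => by
          simpa using pow_card_eq_zero_of_isNilpotent (hS A hA)
    _ = _ := by rw [natDegree_X_pow]; ring

theorem sum_pow_finrank_intertwiners_self_le_of_sq_eq_scalar
    (hq : 2 * Fintype.card ι ^ 2 ≤ Nat.card F) {S : Finset (Matrix ι ι F)}
    (hS : ∀ A ∈ S, ∃ c, A ^ 2 = scalar ι c) :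
    ∑ A ∈ S, Nat.card F ^ finrank F (intertwiners A A) ≤
      2 ^ (2 * Fintype.card ι + 1) * Nat.card F ^ (Fintype.card ι ^ 2 + 1) := by
  classical
  have := Fintype.ofFinite F
  choose! c hc using hS
  calc ∑ A ∈ S, Nat.card F ^ finrank F (intertwiners A A)
      = ∑ t, ∑ A ∈ S with c A = t, Nat.card F ^ finrank F (intertwiners A A) :=
        (Finset.sum_fiberwise S c _).symm
    _ ≤ ∑ _t : F, (2 ^ 2) ^ Fintype.card ι * (2 * Nat.card F ^ Fintype.card ι ^ 2) := by
        refine Finset.sum_le_sum fun t _ => ?_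
        refine (sum_pow_finrank_intertwiners_self_le_of_aeval_eq_zero hq
          (X_pow_sub_C_ne_zero two_pos t) fun A hA => ?_).trans_eq (by rw [natDegree_X_pow_sub_C])
        obtain ⟨hAS, rfl⟩ := Finset.mem_filter.1 hA
        rw [map_sub, map_pow, aeval_X, aeval_C, hc A hAS]
        exact sub_self _
    _ = _ := by
        rw [Finset.sum_const, Finset.card_univ, ← Nat.card_eq_fintype_card, smul_eq_mul,
          ← pow_mul]
        ring

theorem sum_pow_finrank_intertwiners_self_le_of_isConj_neg (h2 : (2 : F) ≠ 0)
    (hq : 2 * Fintype.card ι ^ 2 ≤ Nat.card F) {S : Finset (Matrix ι ι F)}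
    (hS : ∀ A ∈ S, IsConj A (-A)) :
    ∑ A ∈ S, Nat.card F ^ finrank F (intertwiners A A) ≤
      2 ^ (Fintype.card ι ^ 2 + 1) * Nat.card F ^ (Fintype.card ι ^ 2 + Fintype.card ι / 2) := by
  classical
  have := Fintype.ofFinite F
  let coeffs (A : Matrix ι ι F) (j : Fin (Fintype.card ι / 2)) : F :=
    A.charpoly.coeff (Fintype.card ι - 2 * (j + 1))
  calc ∑ A ∈ S, Nat.card F ^ finrank F (intertwiners A A)
      = ∑ t, ∑ A ∈ S with coeffs A = t, Nat.card F ^ finrank F (intertwiners A A) :=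
        (Finset.sum_fiberwise S coeffs _).symm
    _ ≤ ∑ _t : Fin (Fintype.card ι / 2) → F,
          (2 ^ Fintype.card ι) ^ Fintype.card ι * (2 * Nat.card F ^ Fintype.card ι ^ 2) := by
        refine Finset.sum_le_sum fun t _ => ?_
        obtain hempty | ⟨B, hB⟩ := {A ∈ S | coeffs A = t}.eq_empty_or_nonempty
        · simp [hempty]
        refine (sum_pow_finrank_intertwiners_self_le_of_aeval_eq_zero hq
          B.charpoly_monic.ne_zero fun A hA => ?_).trans_eq (by rw [charpoly_natDegree_eq_dim])
        obtain ⟨hBS, rfl⟩ := Finset.mem_filter.1 hB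
        obtain ⟨hAS, hAB⟩ := Finset.mem_filter.1 hA
        rw [← charpoly_eq_of_isConj_neg h2 (hS A hAS) (hS B hBS) fun j hj => congrFun hAB ⟨j, hj⟩]
        exact aeval_self_charpoly A
    _ = _ := by
        rw [Finset.sum_const, Finset.card_univ, Fintype.card_fun, Fintype.card_fin,
          ← Nat.card_eq_fintype_card, smul_eq_mul]
        ring

omit [Finite F] [DecidableEq ι] in
theorem mem_intertwiners_neg_comm {A B : Matrix ι ι F} :
    B ∈ intertwiners A (-A) ↔ A ∈ intertwiners B (-B) := by
  rw [mem_intertwiners, mem_intertwiners, mul_neg, mul_neg, eq_neg_iff_add_eq_zero,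
    eq_neg_iff_add_eq_zero, add_comm]

theorem sum_pow_finrank_intertwiners_neg_le_of_isUnit (h2 : (2 : F) ≠ 0)
    (hq : 2 * Fintype.card ι ^ 2 ≤ Nat.card F) {S : Finset (Matrix ι ι F)}
    (hS : ∀ B ∈ S, IsUnit B) :
    ∑ B ∈ S, Nat.card F ^ finrank F (intertwiners B (-B)) ≤
      2 ^ (Fintype.card ι ^ 2 + 1) * Nat.card F ^ (Fintype.card ι ^ 2 + Fintype.card ι / 2) := by
  classical
  have := Fintype.ofFinite F
  have hcard (A : Matrix ι ι F) : Nat.card F ^ finrank F (intertwiners A (-A)) =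
      #{X | X ∈ intertwiners A (-A)} := by
    rw [← Module.natCard_eq_pow_finrank, Nat.card_eq_fintype_card, Fintype.card_subtype]
  let R : Finset (Matrix ι ι F) := {X | IsConj X (-X)}
  calc ∑ B ∈ S, Nat.card F ^ finrank F (intertwiners B (-B))
      = ∑ B ∈ S, #{X ∈ R | X ∈ intertwiners B (-B)} := Finset.sum_congr rfl fun B hB => by
        obtain ⟨g, rfl⟩ := hS B hB
        rw [hcard, Finset.filter_filter]
        refine congrArg Finset.card
          (Finset.filter_congr fun X _ => ⟨fun hX => ⟨⟨g, ?_⟩, hX⟩, And.right⟩)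
        rw [SemiconjBy, mem_intertwiners.1 hX, mul_neg, neg_mul]
    _ = ∑ X ∈ R, #{B ∈ S | X ∈ intertwiners B (-B)} :=
        Finset.sum_card_bipartiteAbove_eq_sum_card_bipartiteBelow _
    _ ≤ ∑ X ∈ R, Nat.card F ^ finrank F (intertwiners X X) := Finset.sum_le_sum fun X hX => by
        rw [finrank_intertwiners_eq_of_isConj (.refl X) (Finset.mem_filter.1 hX).2, hcard]
        exact Finset.card_le_card fun B hB => Finset.mem_filter.2
          ⟨Finset.mem_univ B, mem_intertwiners_neg_comm.1 (Finset.mem_filter.1 hB).2⟩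
    _ ≤ _ := sum_pow_finrank_intertwiners_self_le_of_isConj_neg h2 hq fun X hX =>
        (Finset.mem_filter.1 hX).2

omit [DecidableEq ι] [DecidableEq κ] [DecidableEq μ] in
theorem card_sq_add_card_sq_le (e : κ ⊕ μ ≃ ι) :
    Fintype.card κ ^ 2 + Fintype.card μ ^ 2 ≤ Fintype.card ι ^ 2 := by
  rw [← Fintype.card_congr e, Fintype.card_sum, add_sq]
  lia

omit [DecidableEq ι] in
theorem card_matrix_prod_le_two_mul_card_units (hq : 2 * Fintype.card ι ^ 2 ≤ Nat.card F)
    (e : κ ⊕ μ ≃ ι) :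
    Nat.card (Matrix κ κ F × Matrix μ μ F) ≤ 2 * Nat.card (Matrix κ κ F × Matrix μ μ F)ˣ := by
  refine card_le_two_mul_card_units (F := F) (le_trans (Nat.mul_le_mul_left 2 ?_) hq)
  rw [finrank_prod, finrank_matrix_self, finrank_matrix_self, ← sq, ← sq]
  exact card_sq_add_card_sq_le e

theorem isNilpotent_fst_and_isUnit_snd_units_conj {R S : Type*} [MonoidWithZero R] [Monoid S]
    {z : R × S} (hN : IsNilpotent z.1) (hB : IsUnit z.2) (u : (R × S)ˣ) :
    IsNilpotent (u * z * (u⁻¹ : (R × S)ˣ)).1 ∧ IsUnit (u * z * (u⁻¹ : (R × S)ˣ)).2 := by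
  constructor
  · obtain ⟨k, hk⟩ := hN
    have hpow := congrArg Prod.fst (Units.conj_pow u z k)
    exact ⟨k, by simpa [hk] using hpow⟩
  · exact ((u.isUnit.map (MonoidHom.snd R S)).mul hB).mul ((u⁻¹).isUnit.map (MonoidHom.snd R S))

theorem pow_mul_sum_pow_finrank_intertwiners_neg_le (hq : 2 * Fintype.card ι ^ 2 ≤ Nat.card F)
    (e : κ ⊕ μ ≃ ι) {SN : Finset (Matrix κ κ F)} {SB : Finset (Matrix μ μ F)}
    (hSN : ∀ N, N ∈ SN ↔ IsNilpotent N) (hSB : ∀ B, B ∈ SB ↔ IsUnit B)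
    {T : Finset (Matrix ι ι F)}
    (hT : ∀ A ∈ T, ∃ N B, IsNilpotent N ∧ IsUnit B ∧ IsConj (blockDiagHom e (N, B)) A) :
    Nat.card F ^ (Fintype.card κ ^ 2 + Fintype.card μ ^ 2) *
        ∑ A ∈ T, Nat.card F ^ finrank F (intertwiners A (-A)) ≤
      2 * Nat.card F ^ Fintype.card ι ^ 2 *
        ((∑ N ∈ SN, Nat.card F ^ finrank F (intertwiners N (-N))) *
          ∑ B ∈ SB, Nat.card F ^ finrank F (intertwiners B (-B))) := by
  have horbit := card_units_mul_sum_le (blockDiagHom_injective (R := F) e) (S := SN ×ˢ SB)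
    (fun z hz u => ?_) (T := T) (fun A hA => ?_)
    (f := fun A => Nat.card F ^ finrank F (intertwiners A (-A)))
    (fun A B h => by rw [finrank_intertwiners_eq_of_isConj h (h.imp fun _ h => h.neg_right)])
  · calc _ = Nat.card (Matrix κ κ F × Matrix μ μ F) *
          ∑ A ∈ T, Nat.card F ^ finrank F (intertwiners A (-A)) := by
          rw [Nat.card_prod, natCard_matrix, natCard_matrix, pow_add]
      _ ≤ 2 * (Nat.card (Matrix ι ι F)ˣ * ∑ z ∈ SN ×ˢ SB, Nat.card F ^
            finrank F (intertwiners (blockDiagHom e z) (-blockDiagHom e z))) := by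
          refine (Nat.mul_le_mul_right _ (card_matrix_prod_le_two_mul_card_units hq e)).trans ?_
          rw [mul_assoc]
          exact Nat.mul_le_mul_left 2 horbit
      _ ≤ 2 * (Nat.card F ^ Fintype.card ι ^ 2 * ∑ z ∈ SN ×ˢ SB, Nat.card F ^
            finrank F (intertwiners z.1 (-z.1)) * Nat.card F ^
            finrank F (intertwiners z.2 (-z.2))) := by
          rw [← natCard_matrix]
          gcongr with z hz
          · exact Nat.card_le_card_of_injective _ Units.val_injective
          · obtain ⟨hN, hB⟩ := Finset.mem_product.1 hz
            rw [← pow_add]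
            exact Nat.pow_le_pow_right Nat.card_pos
              (finrank_intertwiners_blockDiagHom_neg_le e ((hSN _).1 hN) ((hSB _).1 hB))
      _ = _ := by rw [Finset.sum_mul_sum, ← Finset.sum_product', mul_assoc]
  · obtain ⟨hN, hB⟩ := Finset.mem_product.1 hz
    exact Finset.mem_product.2 <| And.imp (hSN _).2 (hSB _).2 <|
      isNilpotent_fst_and_isUnit_snd_units_conj ((hSN _).1 hN) ((hSB _).1 hB) u
  · obtain ⟨N, B, hN, hB, hA⟩ := hT A hA
    exact ⟨(N, B), Finset.mk_mem_product ((hSN N).2 hN) ((hSB B).2 hB), hA⟩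

theorem sum_pow_finrank_intertwiners_neg_le_of_isConj_blockDiagHom (h2 : (2 : F) ≠ 0)
    (hq : 2 * Fintype.card ι ^ 2 ≤ Nat.card F) (e : κ ⊕ μ ≃ ι) {T : Finset (Matrix ι ι F)}
    (hT : ∀ A ∈ T, ∃ N B, IsNilpotent N ∧ IsUnit B ∧ IsConj (blockDiagHom e (N, B)) A) :
    ∑ A ∈ T, Nat.card F ^ finrank F (intertwiners A (-A)) ≤
      2 ^ (Fintype.card ι ^ 2 + 3) * Nat.card F ^ (Fintype.card ι ^ 2 + Fintype.card μ / 2) := by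
  classical
  have := Fintype.ofFinite F
  have hcard := card_sq_add_card_sq_le e
  refine Nat.le_of_mul_le_mul_left ?_ (pow_pos (Nat.card_pos (α := F))
    (Fintype.card κ ^ 2 + Fintype.card μ ^ 2))
  calc _ ≤ _ := pow_mul_sum_pow_finrank_intertwiners_neg_le hq e
        (SN := {N | IsNilpotent N}) (SB := {B | IsUnit B}) (by simp) (by simp) hT
    _ ≤ 2 * Nat.card F ^ Fintype.card ι ^ 2 *
          (2 ^ (Fintype.card κ ^ 2 + 1) * Nat.card F ^ Fintype.card κ ^ 2 *
            (2 ^ (Fintype.card μ ^ 2 + 1) *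
              Nat.card F ^ (Fintype.card μ ^ 2 + Fintype.card μ / 2))) :=
        Nat.mul_le_mul_left _ (Nat.mul_le_mul
          (sum_pow_finrank_intertwiners_neg_le_of_isNilpotent (by omega) (by simp))
          (sum_pow_finrank_intertwiners_neg_le_of_isUnit h2 (by omega) (by simp)))
    _ = 2 ^ (Fintype.card κ ^ 2 + Fintype.card μ ^ 2 + 3) *
          (Nat.card F ^ (Fintype.card κ ^ 2 + Fintype.card μ ^ 2) *
            Nat.card F ^ (Fintype.card ι ^ 2 + Fintype.card μ / 2)) := by ring
    _ ≤ 2 ^ (Fintype.card ι ^ 2 + 3) * (Nat.card F ^ (Fintype.card κ ^ 2 + Fintype.card μ ^ 2) *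
            Nat.card F ^ (Fintype.card ι ^ 2 + Fintype.card μ / 2)) := by gcongr; norm_num
    _ = _ := mul_left_comm _ _ _

end Moments

section CubicMoment

variable {F : Type*} [Field F] {ι κ μ : Type*} [Fintype ι] [Fintype κ] [Fintype μ]
  [DecidableEq ι] [DecidableEq κ] [DecidableEq μ]

theorem finrank_intertwiners_neg_add_le_of_isConj_blockDiagHom (h2 : (2 : F) ≠ 0) (e : κ ⊕ μ ≃ ι)
    {A : Matrix ι ι F} (h0 : A ≠ 0) (hs : ∀ c, c ≠ 0 → A ^ 2 ≠ scalar ι c)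
    {N : Matrix κ κ F} {B : Matrix μ μ F} (hN : IsNilpotent N) (hB : IsUnit B)
    (hA : IsConj (blockDiagHom e (N, B)) A) :
    finrank F (intertwiners A (-A)) + 2 * Fintype.card ι + Fintype.card μ ≤
      Fintype.card ι ^ 2 + 2 := by
  rw [← finrank_intertwiners_eq_of_isConj hA (hA.imp fun _ h => h.neg_right)]
  obtain ⟨g, hg⟩ := hA
  refine finrank_intertwiners_blockDiagHom_neg_add_le h2 e hN hB (fun h => h0 ?_)
    fun c hc h => hs c hc ?_
  · rw [h] at hg
    exact g.mul_left_eq_zero.1 (hg.eq.symm.trans (mul_zero _))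
  · have hg2 := hg.pow_right 2
    rw [h] at hg2
    refine g.isUnit.mul_right_cancel (hg2.eq.symm.trans ?_)
    exact (scalar_commute c (fun _ => Commute.all _ _) _).symm

variable [Finite F] {Q : ℝ}

theorem sum_pow_three_mul_finrank_intertwiners_neg_le_of_sq_eq_scalar (h2 : (2 : F) ≠ 0)
    (hι : 3 ≤ Fintype.card ι) (hq : 2 * Fintype.card ι ^ 2 ≤ Nat.card F) (hQ : 1 ≤ Q)
    (hQ2 : Q ^ 2 = Nat.card F) {S : Finset (Matrix ι ι F)}
    (hS : ∀ A ∈ S, ∃ c, c ≠ 0 ∧ A ^ 2 = scalar ι c) :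
    Q ^ (2 * Fintype.card ι) * ∑ A ∈ S, Q ^ (3 * finrank F (intertwiners A (-A))) ≤
      2 ^ (2 * Fintype.card ι + 1) * Q ^ (3 * Fintype.card ι ^ 2 + 2) := by
  have hsum : ∑ A ∈ S, Q ^ (2 * finrank F (intertwiners A A)) ≤
      2 ^ (2 * Fintype.card ι + 1) * Q ^ (2 * (Fintype.card ι ^ 2 + 1)) := by
    simp_rw [pow_mul Q 2, hQ2]
    exact_mod_cast sum_pow_finrank_intertwiners_self_le_of_sq_eq_scalar hq
      fun A hA => (hS A hA).imp fun _ => And.right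
  calc _ ≤ ∑ A ∈ S, Q ^ Fintype.card ι ^ 2 * Q ^ (2 * finrank F (intertwiners A A)) := by
        rw [Finset.mul_sum]
        refine Finset.sum_le_sum fun A hA => ?_
        obtain ⟨c, hc, hAc⟩ := hS A hA
        rw [← pow_add, ← pow_add]
        exact pow_le_pow_right₀ hQ
          (two_mul_card_add_three_mul_finrank_intertwiners_neg_le h2 hι hc hAc)
    _ ≤ Q ^ Fintype.card ι ^ 2 *
          (2 ^ (2 * Fintype.card ι + 1) * Q ^ (2 * (Fintype.card ι ^ 2 + 1))) := by
        rw [← Finset.mul_sum]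
        gcongr
    _ = _ := by ring

theorem sum_pow_three_mul_finrank_intertwiners_neg_le_of_isConj_blockDiagHom (h2 : (2 : F) ≠ 0)
    (hq : 2 * Fintype.card ι ^ 2 ≤ Nat.card F) (hQ : 1 ≤ Q) (hQ2 : Q ^ 2 = Nat.card F)
    (e : κ ⊕ μ ≃ ι) {S : Finset (Matrix ι ι F)} (h0 : ∀ A ∈ S, A ≠ 0)
    (hs : ∀ A ∈ S, ∀ c, c ≠ 0 → A ^ 2 ≠ scalar ι c)
    (hS : ∀ A ∈ S, ∃ N B, IsNilpotent N ∧ IsUnit B ∧ IsConj (blockDiagHom e (N, B)) A) :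
    Q ^ (2 * Fintype.card ι) * ∑ A ∈ S, Q ^ (3 * finrank F (intertwiners A (-A))) ≤
      2 ^ (Fintype.card ι ^ 2 + 3) * Q ^ (3 * Fintype.card ι ^ 2 + 2) := by
  have hsum : ∑ A ∈ S, Q ^ (2 * finrank F (intertwiners A (-A))) ≤
      2 ^ (Fintype.card ι ^ 2 + 3) * Q ^ (2 * (Fintype.card ι ^ 2 + Fintype.card μ / 2)) := by
    simp_rw [pow_mul Q 2, hQ2]
    exact_mod_cast sum_pow_finrank_intertwiners_neg_le_of_isConj_blockDiagHom h2 hq e hS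
  refine le_of_mul_le_mul_left ?_ (pow_pos (zero_lt_one.trans_le hQ) (Fintype.card μ))
  calc _ ≤ ∑ A ∈ S, Q ^ (Fintype.card ι ^ 2 + 2) *
          Q ^ (2 * finrank F (intertwiners A (-A))) := by
        rw [Finset.mul_sum, Finset.mul_sum]
        refine Finset.sum_le_sum fun A hA => ?_
        obtain ⟨N, B, hN, hB, hA'⟩ := hS A hA
        have := finrank_intertwiners_neg_add_le_of_isConj_blockDiagHom h2 e (h0 A hA) (hs A hA)
          hN hB hA'
        rw [← pow_add, ← pow_add, ← pow_add]
        exact pow_le_pow_right₀ hQ (by lia)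
    _ ≤ Q ^ (Fintype.card ι ^ 2 + 2) * (2 ^ (Fintype.card ι ^ 2 + 3) *
          Q ^ (2 * Fintype.card ι ^ 2 + Fintype.card μ)) := by
        rw [← Finset.mul_sum]
        gcongr
        refine hsum.trans (mul_le_mul_of_nonneg_left (pow_le_pow_right₀ hQ ?_) (by positivity))
        lia
    _ = _ := by ring

omit [DecidableEq ι] in
theorem sum_pow_three_mul_finrank_intertwiners_neg_le (h2 : (2 : F) ≠ 0)
    (hι : 3 ≤ Fintype.card ι) (hq : 2 * Fintype.card ι ^ 2 ≤ Nat.card F) (hQ : 1 ≤ Q)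
    (hQ2 : Q ^ 2 = Nat.card F) {S : Finset (Matrix ι ι F)} (h0 : ∀ A ∈ S, A ≠ 0) :
    Q ^ (2 * Fintype.card ι) * ∑ A ∈ S, Q ^ (3 * finrank F (intertwiners A (-A))) ≤
      (2 ^ (2 * Fintype.card ι + 1) + (Fintype.card ι + 1) * 2 ^ (Fintype.card ι ^ 2 + 3)) *
        Q ^ (3 * Fintype.card ι ^ 2 + 2) := by
  classical
  let HasScalarSq (A : Matrix ι ι F) : Prop := ∃ c, c ≠ 0 ∧ A ^ 2 = scalar ι c
  choose k m hkm hblock using exists_isConj_blockDiagHom (F := F) (ι := ι)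
  have hmaps : ∀ A ∈ {A ∈ S | ¬HasScalarSq A}, m A ∈ Finset.range (Fintype.card ι + 1) :=
    fun A _ => Finset.mem_range.2 (by have := hkm A; lia)
  rw [← Finset.sum_filter_add_sum_filter_not S HasScalarSq, ← Finset.sum_fiberwise_of_maps_to hmaps,
    mul_add, add_mul]
  refine add_le_add (sum_pow_three_mul_finrank_intertwiners_neg_le_of_sq_eq_scalar h2 hι hq hQ hQ2
    fun A hA => (Finset.mem_filter.1 hA).2) ?_
  rw [Finset.mul_sum]
  refine (Finset.sum_le_card_nsmul _ _
    (2 ^ (Fintype.card ι ^ 2 + 3) * Q ^ (3 * Fintype.card ι ^ 2 + 2)) fun j hj => ?_).trans_eq ?_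
  · have hj' : Fintype.card ι - j + j = Fintype.card ι :=
      Nat.sub_add_cancel (Finset.mem_range_succ_iff.1 hj)
    let e : Fin (Fintype.card ι - j) ⊕ Fin j ≃ ι :=
      finSumFinEquiv.trans (Fintype.equivFinOfCardEq hj'.symm).symm
    refine sum_pow_three_mul_finrank_intertwiners_neg_le_of_isConj_blockDiagHom h2 hq hQ hQ2 e
      (fun A hA => ?_) (fun A hA c hc hAc => ?_) fun A hA => ?_
    all_goals
      obtain ⟨hAf, hAm⟩ := Finset.mem_filter.1 hA
      obtain ⟨hAS, hAs⟩ := Finset.mem_filter.1 hAf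
    · exact h0 A hAS
    · exact hAs ⟨c, hc, hAc⟩
    · have hblockA := hblock A
      rw [hAm, show k A = Fintype.card ι - j by have := hkm A; lia] at hblockA
      exact hblockA e
  · rw [Finset.card_range, nsmul_eq_mul]
    push_cast
    ring

omit [DecidableEq ι] in
theorem sum_pow_mul_add_finrank_intertwiners_neg_le (h2 : (2 : F) ≠ 0)
    (hι : 3 ≤ Fintype.card ι) (hq : 2 * Fintype.card ι ^ 2 ≤ Nat.card F) (hQ : 1 ≤ Q)
    (hQ2 : Q ^ 2 = Nat.card F) {r : ℕ} (hr : 3 ≤ r) {S : Finset (Matrix ι ι F)}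
    (h0 : ∀ A ∈ S, A ≠ 0) :
    ∑ A ∈ S, Q ^ ((Fintype.card ι ^ 2 + finrank F (intertwiners A (-A))) * r) ≤
      (2 ^ (2 * Fintype.card ι + 1) + (Fintype.card ι + 1) * 2 ^ (Fintype.card ι ^ 2 + 3)) *
        Q ^ (2 * (2 * Fintype.card ι ^ 2 +
          (r - 2) * (Fintype.card ι ^ 2 + 1 - Fintype.card ι))) := by
  have hcubic := sum_pow_three_mul_finrank_intertwiners_neg_le h2 hι hq hQ hQ2 h0
  obtain ⟨s, rfl⟩ := Nat.exists_eq_add_of_le' hr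
  set m := Fintype.card ι
  obtain ⟨d, hd⟩ : ∃ d, m ^ 2 + 1 = d + m :=
    Nat.exists_eq_add_of_le' ((Nat.le_self_pow two_ne_zero m).trans (Nat.le_succ _))
  rw [hd, Nat.add_sub_cancel, Nat.add_sub_cancel_right (m := 2) (n := s + 1)]
  refine le_of_mul_le_mul_left ?_ (pow_pos (zero_lt_one.trans_le hQ) (2 * m))
  calc _ ≤ Q ^ (2 * m) * ∑ A ∈ S, Q ^ (2 * d * s + 3 * m ^ 2) *
          Q ^ (3 * finrank F (intertwiners A (-A))) := by
        refine mul_le_mul_of_nonneg_left (Finset.sum_le_sum fun A hA => ?_) (by positivity)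
        have hρ := finrank_intertwiners_neg_add_le h2 (h0 A hA)
        have hρs : (m ^ 2 + finrank F (intertwiners A (-A))) * s ≤ 2 * d * s :=
          Nat.mul_le_mul_right s (by lia)
        rw [← pow_add]
        exact pow_le_pow_right₀ hQ (by linarith)
    _ ≤ Q ^ (2 * d * s + 3 * m ^ 2) * ((2 ^ (2 * m + 1) + (m + 1) * 2 ^ (m ^ 2 + 3)) *
          Q ^ (3 * m ^ 2 + 2)) := by
        rw [← Finset.mul_sum, mul_left_comm]
        gcongr
    _ = _ := by
        rw [mul_left_comm, mul_left_comm (Q ^ (2 * m)), ← pow_add, ← pow_add]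
        congr 2
        linarith

end CubicMoment

section Fourier

variable {F : Type} [Field F] [Fintype F] {n : ℕ}

theorem psi_eq_stdAddChar (X : Matrix (Fin n) (Fin n) F) :
    letI : Algebra (ZMod (ringChar F)) F := ZMod.algebra _ _
    letI : Fact (ringChar F).Prime := ⟨CharP.char_is_prime F _⟩
    psi F X = ZMod.stdAddChar (Algebra.trace (ZMod (ringChar F)) F X.trace) := by
  let _ : Algebra (ZMod (ringChar F)) F := ZMod.algebra _ _
  let _ : Fact (ringChar F).Prime := ⟨CharP.char_is_prime F _⟩
  set t := Algebra.trace (ZMod (ringChar F)) F X.trace with ht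
  have ht' : ((t.val : ℤ) : ZMod (ringChar F)) = t := by simp
  rw [← ht', ZMod.stdAddChar_coe, psi, ← ht]
  push_cast
  rw [mul_div_assoc]

variable (F n) in
/-- The character `ψ` of the paper, as an additive character of `M_n(F)`. -/
noncomputable def psiAddChar : AddChar (Matrix (Fin n) (Fin n) F) ℂ where
  toFun := psi F
  map_zero_eq_one' := by simp [psi]
  map_add_eq_mul' X Y := by
    simp_rw [psi_eq_stdAddChar, trace_add, map_add, AddChar.map_add_eq_mul]

@[simp] theorem psiAddChar_apply (X : Matrix (Fin n) (Fin n) F) : psiAddChar F n X = psi F X :=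
  rfl

theorem psi_add (X Y : Matrix (Fin n) (Fin n) F) : psi F (X + Y) = psi F X * psi F Y :=
  (psiAddChar F n).map_add_eq_mul X Y

theorem psi_sum {κ : Type*} (s : Finset κ) (X : κ → Matrix (Fin n) (Fin n) F) :
    psi F (∑ i ∈ s, X i) = ∏ i ∈ s, psi F (X i) :=
  map_prod (psiAddChar F n).toMonoidHom (fun i => Multiplicative.ofAdd (X i)) s

theorem psi_congr {X Y : Matrix (Fin n) (Fin n) F} (h : X.trace = Y.trace) : psi F X = psi F Y := by
  rw [psi, h, psi]

theorem psiAddChar_mulRight_eq_zero_iff {Y : Matrix (Fin n) (Fin n) F} :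
    (psiAddChar F n).compAddMonoidHom (AddMonoidHom.mulRight Y) = 0 ↔ Y = 0 := by
  refine ⟨fun h => ?_, fun h => ?_⟩
  · let _ : Algebra (ZMod (ringChar F)) F := ZMod.algebra _ _
    have _ : Fact (ringChar F).Prime := ⟨CharP.char_is_prime F _⟩
    refine ext_iff_trace_mul_left.2 fun A => ?_
    rw [mul_zero, trace_zero]
    by_contra hA
    obtain ⟨b, hb⟩ := FiniteField.trace_to_zmod_nondegenerate F hA
    refine hb (ZMod.injective_stdAddChar ?_)
    have := DFunLike.congr_fun h (b • A)
    simpa [psi_eq_stdAddChar, mul_comm] using this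
  · ext A
    simp [h]

theorem sum_psi_mul [DecidableEq F] (Y : Matrix (Fin n) (Fin n) F) :
    ∑ A, psi F (A * Y) = if Y = 0 then (Fintype.card F : ℂ) ^ n ^ 2 else 0 := by
  have := AddChar.sum_eq_ite ((psiAddChar F n).compAddMonoidHom (AddMonoidHom.mulRight Y))
  have hcard := natCard_matrix F (Fin n)
  simp_rw [psiAddChar_mulRight_eq_zero_iff, ← Nat.card_eq_fintype_card, hcard] at this
  simpa using this

theorem radical_eq_intertwiners_neg (A : Matrix (Fin n) (Fin n) F) :
    radical F A = intertwiners A (-A) := by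
  ext X
  have htrace (Y : Matrix (Fin n) (Fin n) F) :
      (A * (X * Y + Y * X)).trace = ((A * X + X * A) * Y).trace := by
    rw [mul_add, add_mul, trace_add, trace_add, ← mul_assoc, ← mul_assoc, trace_mul_comm (A * Y),
      mul_assoc X]
  rw [mem_intertwiners, mul_neg, ← add_eq_zero_iff_eq_neg, ext_iff_trace_mul_right]
  simp only [zero_mul, trace_zero, ← htrace]
  exact Iff.rfl

theorem rho_eq_finrank_intertwiners_neg (A : Matrix (Fin n) (Fin n) F) :
    rho F A = finrank F (intertwiners A (-A)) := by
  rw [rho, radical_eq_intertwiners_neg]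

theorem psi_mul_conj_psi (A B X H : Matrix (Fin n) (Fin n) F) :
    psi F (A * (X + H) ^ 2 + B * (X + H)) * (starRingEnd ℂ) (psi F (A * X ^ 2 + B * X)) =
      psi F (A * H ^ 2 + B * H) * psi F (X * (H * A + A * H)) := by
  simp only [← psiAddChar_apply, ← AddChar.map_neg_eq_conj, ← AddChar.map_add_eq_mul]
  refine psi_congr ?_
  have hexp : A * (X + H) ^ 2 + B * (X + H) + -(A * X ^ 2 + B * X) =
      A * H ^ 2 + B * H + (A * X * H + A * H * X) := by noncomm_ring
  rw [hexp, trace_add, trace_add _ (X * _), mul_add, trace_add, trace_add (X * _),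
    trace_add (A * X * H), mul_assoc A X, trace_mul_comm A (X * H), mul_assoc X H,
    trace_mul_comm (A * H)]

theorem matGaussSum_mul_conj [DecidableEq F] (A B : Matrix (Fin n) (Fin n) F) :
    matGaussSum F A B * (starRingEnd ℂ) (matGaussSum F A B) =
      ∑ H with H * A + A * H = 0, psi F (A * H ^ 2 + B * H) * (Fintype.card F : ℂ) ^ n ^ 2 := by
  calc _ = ∑ X, ∑ H, psi F (A * (X + H) ^ 2 + B * (X + H)) *
          (starRingEnd ℂ) (psi F (A * X ^ 2 + B * X)) := by
        rw [matGaussSum, map_sum, Finset.sum_mul_sum, Finset.sum_comm]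
        exact Finset.sum_congr rfl fun X _ => (Equiv.sum_comp (Equiv.addLeft X) fun Y =>
          psi F (A * Y ^ 2 + B * Y) * (starRingEnd ℂ) (psi F (A * X ^ 2 + B * X))).symm
    _ = ∑ H, psi F (A * H ^ 2 + B * H) * ∑ X, psi F (X * (H * A + A * H)) := by
        simp_rw [psi_mul_conj_psi, Finset.mul_sum]
        exact Finset.sum_comm
    _ = _ := by simp_rw [sum_psi_mul, mul_ite, mul_zero, Finset.sum_filter]

theorem sq_norm_matGaussSum_le (A B : Matrix (Fin n) (Fin n) F) :
    ‖matGaussSum F A B‖ ^ 2 ≤ (Fintype.card F : ℝ) ^ (n ^ 2 + rho F A) := by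
  classical
  have hcard : #{H | H * A + A * H = 0} = Fintype.card F ^ rho F A := by
    rw [rho_eq_finrank_intertwiners_neg, ← card_eq_pow_finrank (K := F), Fintype.card_subtype]
    simp [add_eq_zero_iff_eq_neg']
  calc ‖matGaussSum F A B‖ ^ 2
      = ‖∑ H with H * A + A * H = 0, psi F (A * H ^ 2 + B * H) * (Fintype.card F : ℂ) ^ n ^ 2‖ := by
        rw [← matGaussSum_mul_conj, norm_mul, RCLike.norm_conj, sq]
    _ ≤ ∑ H with H * A + A * H = 0, (Fintype.card F : ℝ) ^ n ^ 2 := by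
        refine norm_sum_le_of_le _ fun H _ => ?_
        rw [← psiAddChar_apply, norm_mul, AddChar.norm_apply, one_mul, norm_pow,
          Complex.norm_natCast]
    _ = _ := by
        rw [Finset.sum_const, hcard, nsmul_eq_mul, pow_add, mul_comm, Nat.cast_pow]

theorem pow_mul_card_matSphere [DecidableEq F] (r : ℕ) (T : Matrix (Fin n) (Fin n) F) :
    (Fintype.card F : ℂ) ^ n ^ 2 * #(matSphere F r T) =
      ∑ A, psi F (-(A * T)) * matGaussSum F A 0 ^ r := by
  have hterm (A : Matrix (Fin n) (Fin n) F) : psi F (-(A * T)) * matGaussSum F A 0 ^ r =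
      ∑ X : Fin r → Matrix (Fin n) (Fin n) F, psi F (A * (∑ i, X i ^ 2 - T)) := by
    rw [matGaussSum, Fintype.sum_pow, Finset.mul_sum]
    refine Finset.sum_congr rfl fun X _ => ?_
    simp_rw [zero_mul, add_zero]
    rw [mul_sub, sub_eq_neg_add, psi_add, Finset.mul_sum, psi_sum]
  simp_rw [hterm]
  rw [Finset.sum_comm]
  simp_rw [sum_psi_mul, sub_eq_zero]
  rw [← Finset.sum_filter, Finset.sum_const, nsmul_eq_mul, mul_comm, matSphere]

theorem matGaussSum_zero_zero :
    matGaussSum F (0 : Matrix (Fin n) (Fin n) F) 0 = (Fintype.card F : ℂ) ^ n ^ 2 := by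
  classical
  simpa [matGaussSum] using sum_psi_mul (0 : Matrix (Fin n) (Fin n) F)

theorem abs_pow_mul_card_matSphere_sub_le [DecidableEq F] {Q : ℝ} (hQ : 0 ≤ Q)
    (hQ2 : Q ^ 2 = Fintype.card F) (r : ℕ) (T : Matrix (Fin n) (Fin n) F) :
    |(Fintype.card F : ℝ) ^ n ^ 2 * #(matSphere F r T) - (Fintype.card F : ℝ) ^ (n ^ 2 * r)| ≤
      ∑ A : Matrix (Fin n) (Fin n) F with A ≠ 0, Q ^ ((n ^ 2 + rho F A) * r) := by
  have hterm (A : Matrix (Fin n) (Fin n) F) :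
      ‖psi F (-(A * T)) * matGaussSum F A 0 ^ r‖ ≤ Q ^ ((n ^ 2 + rho F A) * r) := by
    rw [← psiAddChar_apply, norm_mul, AddChar.norm_apply, one_mul, norm_pow, pow_mul]
    refine pow_le_pow_left₀ (norm_nonneg _) (le_of_sq_le_sq ?_ (pow_nonneg hQ _)) r
    rw [← pow_mul, mul_comm _ 2, pow_mul, hQ2]
    exact sq_norm_matGaussSum_le A 0
  have hsum : (Fintype.card F : ℂ) ^ n ^ 2 * #(matSphere F r T) -
        (Fintype.card F : ℂ) ^ (n ^ 2 * r) =
      ∑ A : Matrix (Fin n) (Fin n) F with A ≠ 0, psi F (-(A * T)) * matGaussSum F A 0 ^ r := by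
    rw [pow_mul_card_matSphere, sub_eq_iff_eq_add', Finset.filter_ne',
      ← Finset.add_sum_erase _ _ (Finset.mem_univ 0), matGaussSum_zero_zero, ← pow_mul]
    simp [psi]
  rw [← Real.norm_eq_abs, ← Complex.norm_real]
  push_cast
  rw [hsum]
  exact norm_sum_le_of_le _ fun A _ => hterm A

theorem abs_card_matSphere_sub_le_of_two_mul_sq_le [DecidableEq F] (h2 : (2 : F) ≠ 0) (hn : 3 ≤ n)
    (hq : 2 * n ^ 2 ≤ Fintype.card F) {r : ℕ} (hr : 3 ≤ r) (T : Matrix (Fin n) (Fin n) F) :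
    |(#(matSphere F r T) : ℝ) - (Fintype.card F : ℝ) ^ (n ^ 2 * (r - 1))| ≤
      (2 ^ (2 * n + 1) + (n + 1) * 2 ^ (n ^ 2 + 3)) *
        (Fintype.card F : ℝ) ^ (n ^ 2 + (r - 2) * (n ^ 2 + 1 - n)) := by
  obtain ⟨Q, hQ, hQ2⟩ : ∃ Q : ℝ, 1 ≤ Q ∧ Q ^ 2 = Fintype.card F :=
    ⟨√(Fintype.card F), Real.one_le_sqrt.2 (mod_cast Fintype.card_pos),
      Real.sq_sqrt (by positivity)⟩
  have hmoment := sum_pow_mul_add_finrank_intertwiners_neg_le h2 (ι := Fin n) (by simpa)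
    (by simpa using hq) hQ (by simpa using hQ2) hr (S := {A | A ≠ 0})
    fun A hA => (Finset.mem_filter.1 hA).2
  simp_rw [← rho_eq_finrank_intertwiners_neg, Fintype.card_fin] at hmoment
  have hpos : 0 < (Fintype.card F : ℝ) ^ n ^ 2 := by positivity
  refine le_of_mul_le_mul_left ?_ hpos
  calc _ = |(Fintype.card F : ℝ) ^ n ^ 2 * #(matSphere F r T) -
          (Fintype.card F : ℝ) ^ (n ^ 2 * r)| := by
        rw [← abs_of_pos hpos, ← abs_mul, abs_of_pos hpos, mul_sub, ← pow_add, ← mul_one_add,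
          Nat.add_sub_cancel' (by lia)]
    _ ≤ _ := (abs_pow_mul_card_matSphere_sub_le (by linarith) hQ2 r T).trans hmoment
    _ = _ := by rw [← hQ2, ← pow_mul, ← pow_mul]; ring

theorem card_matSphere_le [DecidableEq F] (r : ℕ) (T : Matrix (Fin n) (Fin n) F) :
    #(matSphere F r T) ≤ Fintype.card F ^ (n ^ 2 * r) := by
  refine (Finset.card_le_univ _).trans_eq ?_
  rw [Fintype.card_fun, ← Nat.card_eq_fintype_card, natCard_matrix, Nat.card_eq_fintype_card,
    Fintype.card_fin, Fintype.card_fin, ← pow_mul]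

theorem abs_card_matSphere_sub_le_pow [DecidableEq F] (r : ℕ) (T : Matrix (Fin n) (Fin n) F) :
    |(#(matSphere F r T) : ℝ) - (Fintype.card F : ℝ) ^ (n ^ 2 * (r - 1))| ≤
      (Fintype.card F : ℝ) ^ (n ^ 2 * r) :=
  abs_sub_le_of_nonneg_of_le (Nat.cast_nonneg _) (mod_cast card_matSphere_le r T) (by positivity)
    (pow_le_pow_right₀ (mod_cast Fintype.card_pos) (Nat.mul_le_mul_left _ (Nat.sub_le r 1)))

end Fourier

theorem two_ne_zero_of_odd_card {F : Type*} [Field F] [Fintype F] (hF : Odd (Fintype.card F)) :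
    (2 : F) ≠ 0 :=
  Ring.two_ne_zero fun h => Nat.not_even_iff_odd.2 hF (Nat.even_iff.2
    (FiniteField.even_card_iff_char_two.1 h))

theorem natCast_add_mul_eq_sub (n : ℕ) {r : ℕ} (hr : 2 ≤ r) :
    ((n ^ 2 + (r - 2) * (n ^ 2 + 1 - n) : ℕ) : ℤ) = (r - 1) * n ^ 2 - (n - 1) * (r - 2) := by
  have hle : n ≤ n ^ 2 + 1 := (Nat.le_self_pow two_ne_zero n).trans (Nat.le_succ _)
  push_cast [Nat.cast_sub hr, Nat.cast_sub hle]
  ring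

end MatrixSphere

/-- Proposition 5.7, size part: for `n ≥ 3`, `r ≥ 3`,
`|#σ_T - q^{n²(r-1)}| ≤ c q^{(r-1)n² - (n-1)(r-2)}` uniformly over odd `q`, `T ∈ M_n(F_q)`. -/
theorem matSphere_card_general_rank (n r : ℕ) (hn : 3 ≤ n) (hr : 3 ≤ r) :
    ∃ c : ℝ, 0 < c ∧
      ∀ (F : Type) [Field F] [Fintype F] [DecidableEq F],
        Odd (Fintype.card F) →
        ∀ T : Matrix (Fin n) (Fin n) F,
          |((matSphere F r T).card : ℝ) - (Fintype.card F : ℝ) ^ (n ^ 2 * (r - 1))| ≤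
            c * (Fintype.card F : ℝ) ^
              (((r : ℤ) - 1) * (n : ℤ) ^ 2 - ((n : ℤ) - 1) * ((r : ℤ) - 2)) := by
  refine ⟨(2 ^ (2 * n + 1) + (n + 1) * 2 ^ (n ^ 2 + 3)) + (2 * n ^ 2) ^ (n ^ 2 * r),
    by positivity, fun F _ _ _ hF T => ?_⟩
  rw [← MatrixSphere.natCast_add_mul_eq_sub n (by lia), zpow_natCast, add_mul]
  rcases le_total (2 * n ^ 2) (Fintype.card F) with hq | hq
  · refine le_add_of_le_of_nonneg ?_ (by positivity)
    exact MatrixSphere.abs_card_matSphere_sub_le_of_two_mul_sq_le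
      (MatrixSphere.two_ne_zero_of_odd_card hF) hn hq hr T
  · refine le_add_of_nonneg_of_le (by positivity) ?_
    calc _ ≤ (Fintype.card F : ℝ) ^ (n ^ 2 * r) := MatrixSphere.abs_card_matSphere_sub_le_pow r T
      _ ≤ (2 * n ^ 2) ^ (n ^ 2 * r) := by gcongr; exact_mod_cast hq
      _ ≤ _ := le_mul_of_one_le_right (by positivity)
        (one_le_pow₀ (mod_cast Fintype.card_pos))
end

section
/- Let r ≥ 3 be an integer. There exists a constant c > 0 such that for every odd prime power q, Σ_{S ∈ M_3(𝔽_q), S ≠ 0} q^{r(9 + ρ_S)/2} ≤ c·q^{7r+4}, where ρ_S is the radical invariant of S. (Consequently the sums Σ_{S ≠ 0} ψ(−ST)·G(S,0)^r and Σ_{S ≠ 0} ψ(−ST)·Π_{i=1}^r G(S,−M_i) over M_3(𝔽_q) are O(q^{7r+4}).) -/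
open scoped BigOperators

/-!
A matrix `X` lies in the radical of `S` iff `S X + X S = 0`, so `ρ_S` grows with the number of
pairs of eigenvalues of `S` summing to zero. When `S` is nonderogatory, `X` is determined by its
value at a cyclic vector, and Cayley-Hamilton gives `(tr S • S² + det S • 1) X = 0`, so `ρ_S` is at
most the nullity of that matrix; otherwise `S` is a scalar plus a matrix of rank at most one, and
`ρ_S` can be bounded directly. Counting points stratum by stratum, there are
`O(q^((23 - 3k)/2))` matrices with `ρ_S ≥ k`, for every `k ≤ 5`, and `ρ_S ≤ 5` unless `S = 0`.
The stratum `ρ_S = k` then contributes `O(q^(7r + 4 - (r - 3)(5 - k)/2))` to the sum.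
-/

open Matrix Module Polynomial

theorem exists_eq_vecMulVec_of_rank_le_one {K n : Type*} [Field K] [Fintype n] [Nonempty n]
    {A : Matrix n n K} (hA : A.rank ≤ 1) : ∃ u v : n → K, (∃ i, u i = 1) ∧ A = vecMulVec u v := by
  classical
  obtain ⟨⟨u, _⟩, hu⟩ := finrank_le_one_iff.1 (show finrank K A.mulVecLin.range ≤ 1 from hA)
  have hcol (j : n) : ∃ c : K, c • u = A.col j := by
    obtain ⟨c, hc⟩ := hu ⟨A.col j, Pi.single j 1, by simp⟩
    exact ⟨c, congrArg Subtype.val hc⟩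
  choose v hv using hcol
  have hA : A = vecMulVec u v := by
    ext i j
    rw [vecMulVec_apply, mul_comm, ← col_apply A j i, ← hv j, Pi.smul_apply, smul_eq_mul]
  by_cases hu0 : u = 0
  · exact ⟨1, 0, ⟨Classical.arbitrary n, rfl⟩, by rw [hA, hu0, zero_vecMulVec, vecMulVec_zero]⟩
  obtain ⟨i, hi⟩ := Function.ne_iff.1 hu0
  refine ⟨(u i)⁻¹ • u, u i • v, ⟨i, inv_mul_cancel₀ hi⟩, ?_⟩
  rw [hA, smul_vecMulVec, vecMulVec_smul, smul_smul, inv_mul_cancel₀ hi, one_smul]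

theorem ncard_setOf_det_add_smul_eq_zero_le {K n : Type*} [Field K] [Fintype n] [DecidableEq n]
    (A : Matrix n n K) {E : Matrix n n K} (hE : E.det ≠ 0) :
    {t : K | (A + t • E).det = 0}.ncard ≤ Fintype.card n := by
  have hp : det ((X : K[X]) • E.map C + A.map C) ≠ 0 :=
    fun h ↦ hE (by rw [← coeff_det_X_add_C_card E A, h, coeff_zero])
  refine le_trans ?_ ((ncard_rootSet_le _ K).trans (natDegree_det_X_add_C_le E A))
  refine Set.ncard_le_ncard (fun t ht ↦ ?_) (rootSet_finite _ _)
  rw [mem_rootSet_of_ne hp, coe_aeval_eq_eval, ← coe_evalRingHom, RingHom.map_det,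
    ← show (A + t • E).det = 0 from ht]
  congr 1
  ext i j
  simp [add_comm (A i j), mul_comm t]

section Counting

variable {K : Type*} [Field K] [Finite K]

theorem ncard_le_mul_ncard_of_mapsTo {α β : Type*} [Finite α] [Finite β] {s : Set α} {t : Set β}
    {f : α → β} (hf : Set.MapsTo f s t) {d : ℕ} (hd : ∀ b ∈ t, {a ∈ s | f a = b}.ncard ≤ d) :
    s.ncard ≤ d * t.ncard := by
  classical
  have := Fintype.ofFinite α
  have := Fintype.ofFinite β
  simp only [Set.ncard_eq_toFinset_card'] at hd ⊢
  refine Finset.card_le_mul_card_image_of_maps_to (by simpa [Set.MapsTo] using hf) d fun b hb ↦ ?_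
  convert hd b (by simpa using hb)
  ext
  simp

theorem ncard_le_of_forall_line {V : Type*} [AddCommGroup V] [Module K V] [FiniteDimensional K V]
    {Z : Set V} {e : V} (he : e ≠ 0) {d : ℕ} (hd : ∀ x, {t : K | x + t • e ∈ Z}.ncard ≤ d) :
    Z.ncard ≤ d * Nat.card K ^ (finrank K V - 1) := by
  have : Finite V := Module.finite_of_finite K
  have : Finite (V ⧸ K ∙ e) := Module.finite_of_finite K
  have hfinrank : finrank K (V ⧸ K ∙ e) = finrank K V - 1 := by
    rw [← Submodule.finrank_quotient_add_finrank (K ∙ e), finrank_span_singleton he,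
      Nat.add_sub_cancel]
  rw [← hfinrank, ← Module.natCard_eq_pow_finrank, ← Set.ncard_univ]
  refine ncard_le_mul_ncard_of_mapsTo (f := (K ∙ e).mkQ) (Set.mapsTo_univ _ _) fun b _ ↦ ?_
  obtain ⟨x, rfl⟩ := (K ∙ e).mkQ_surjective b
  refine le_trans ?_ (hd x)
  refine (Set.ncard_le_ncard ?_).trans (Set.ncard_image_le (f := fun t : K ↦ x + t • e))
  rintro y ⟨hy, hyx⟩
  obtain ⟨t, ht⟩ := Submodule.mem_span_singleton.1 ((Submodule.Quotient.eq _).1 hyx)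
  have hxt : x + t • e = y := by rw [ht, add_sub_cancel]
  exact ⟨t, by rwa [Set.mem_ofPred_eq, hxt], hxt⟩

theorem ncard_setOf_dual_eq_le {V : Type*} [AddCommGroup V] [Module K V] [FiniteDimensional K V]
    {f : Dual K V} (hf : f ≠ 0) (b : K) :
    {x | f x = b}.ncard ≤ Nat.card K ^ (finrank K V - 1) := by
  obtain ⟨e, he⟩ : ∃ e, f e ≠ 0 := by
    by_contra! h
    exact hf (LinearMap.ext h)
  rw [← one_mul (_ ^ _)]
  refine ncard_le_of_forall_line (ne_of_apply_ne f (by simpa using he)) fun x ↦ ?_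
  refine (Set.ncard_le_one (Set.toFinite _)).2 fun s hs t ht ↦ ?_
  simp only [Set.mem_ofPred_eq, map_add, map_smul, smul_eq_mul] at hs ht
  exact mul_right_cancel₀ he (add_left_cancel (hs.trans ht.symm))

variable {n : Type*} [Fintype n]

theorem ncard_setOf_dotProduct_eq_zero_le {u : n → K} (hu : u ≠ 0) :
    {v | v ⬝ᵥ u = 0}.ncard ≤ Nat.card K ^ (Fintype.card n - 1) := by
  classical
  have hdual : dotProductEquiv K n u ≠ 0 := (dotProductEquiv K n).map_ne_zero_iff.2 hu
  simpa [dotProduct_comm] using ncard_setOf_dual_eq_le hdual 0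

theorem ncard_setOf_exists_eq_one_le :
    {u : n → K | ∃ i, u i = 1}.ncard ≤ Fintype.card n * Nat.card K ^ (Fintype.card n - 1) := by
  rw [Set.ofPred_exists]
  refine (Set.ncard_iUnion_le_of_fintype _).trans ?_
  rw [← smul_eq_mul, ← Finset.card_univ]
  refine Finset.sum_le_card_nsmul _ _ _ fun i _ ↦ ?_
  have hproj : (LinearMap.proj i : Dual K (n → K)) ≠ 0 := fun h ↦ by
    classical simpa using LinearMap.congr_fun h (Pi.single i 1)
  simpa using ncard_setOf_dual_eq_le hproj 1

theorem ncard_setOf_rank_le_one_le [Nonempty n] :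
    {A : Matrix n n K | A.rank ≤ 1}.ncard
      ≤ Fintype.card n * Nat.card K ^ (2 * Fintype.card n - 1) := by
  let P : Set ((n → K) × (n → K)) := {u | ∃ i, u i = 1} ×ˢ Set.univ
  have hsub : {A : Matrix n n K | A.rank ≤ 1} ⊆ (fun p ↦ vecMulVec p.1 p.2) '' P := by
    intro A hA
    obtain ⟨u, v, hu, rfl⟩ := exists_eq_vecMulVec_of_rank_le_one hA
    exact ⟨(u, v), ⟨hu, trivial⟩, rfl⟩
  have hpow : Nat.card K ^ (2 * Fintype.card n - 1)
      = Nat.card K ^ (Fintype.card n - 1) * Nat.card K ^ Fintype.card n := by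
    rw [← pow_add]
    congr 1
    have := Fintype.card_pos (α := n)
    lia
  calc
    _ ≤ P.ncard := (Set.ncard_le_ncard hsub).trans Set.ncard_image_le
    _ ≤ _ := by
      rw [Set.ncard_prod, hpow, ← mul_assoc, Set.ncard_univ, Nat.card_fun,
        Nat.card_eq_fintype_card (α := n)]
      gcongr
      exact ncard_setOf_exists_eq_one_le

theorem ncard_setOf_rank_le_one_and_trace_eq_zero_le [Nonempty n] :
    {A : Matrix n n K | A.rank ≤ 1 ∧ A.trace = 0}.ncard
      ≤ Fintype.card n * Nat.card K ^ (2 * Fintype.card n - 2) := by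
  let P : Set ((n → K) × (n → K)) := {p | (∃ i, p.1 i = 1) ∧ p.2 ⬝ᵥ p.1 = 0}
  have hsub : {A : Matrix n n K | A.rank ≤ 1 ∧ A.trace = 0} ⊆
      (fun p ↦ vecMulVec p.1 p.2) '' P := by
    rintro A ⟨hA, htr⟩
    obtain ⟨u, v, hu, rfl⟩ := exists_eq_vecMulVec_of_rank_le_one hA
    exact ⟨(u, v), ⟨hu, by rwa [dotProduct_comm, ← trace_vecMulVec]⟩, rfl⟩
  have hfiber (u : n → K) (hu : ∃ i, u i = 1) :
      {p ∈ P | p.1 = u}.ncard ≤ Nat.card K ^ (Fintype.card n - 1) := by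
    have hu0 : u ≠ 0 := by
      rintro rfl
      simp at hu
    refine le_trans ?_ (ncard_setOf_dotProduct_eq_zero_le hu0)
    refine Set.ncard_le_ncard_of_injOn Prod.snd ?_ ?_
    · rintro p ⟨⟨-, hp⟩, rfl⟩
      exact hp
    · rintro p ⟨-, hp⟩ p' ⟨-, hp'⟩ h
      exact Prod.ext (hp.trans hp'.symm) h
  have hpow : 2 * Fintype.card n - 2 = (Fintype.card n - 1) + (Fintype.card n - 1) := by lia
  calc
    _ ≤ P.ncard := (Set.ncard_le_ncard hsub).trans Set.ncard_image_le
    _ ≤ _ * {u : n → K | ∃ i, u i = 1}.ncard :=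
      ncard_le_mul_ncard_of_mapsTo (fun p hp ↦ hp.1) hfiber
    _ ≤ _ := by
      grw [ncard_setOf_exists_eq_one_le, hpow, pow_add, mul_left_comm]

variable [DecidableEq n]

theorem ncard_setOf_exists_rank_sub_smul_le_one_le [Nonempty n] :
    {A : Matrix n n K | ∃ a : K, (A - a • 1).rank ≤ 1}.ncard
      ≤ Nat.card K * (Fintype.card n * Nat.card K ^ (2 * Fintype.card n - 1)) := by
  have hsub : {A : Matrix n n K | ∃ a : K, (A - a • 1).rank ≤ 1} ⊆
      (fun p : K × Matrix n n K ↦ p.1 • 1 + p.2) '' (Set.univ ×ˢ {B | B.rank ≤ 1}) := by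
    rintro A ⟨a, ha⟩
    exact ⟨(a, A - a • 1), ⟨trivial, ha⟩, add_sub_cancel _ _⟩
  grw [Set.ncard_le_ncard hsub, Set.ncard_image_le, Set.ncard_prod, Set.ncard_univ,
    ncard_setOf_rank_le_one_le]

theorem ncard_setOf_det_eq_zero_le [Nonempty n] :
    {S : Matrix n n K | S.det = 0}.ncard
      ≤ Fintype.card n * Nat.card K ^ (Fintype.card n ^ 2 - 1) := by
  have h := ncard_le_of_forall_line (K := K) (Z := {S : Matrix n n K | S.det = 0})
    one_ne_zero fun A ↦ ncard_setOf_det_add_smul_eq_zero_le A (by simp)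
  rwa [finrank_matrix, finrank_self, mul_one, ← sq] at h

theorem ncard_setOf_det_trace_sub_eq_zero_le [Nonempty n] (hn : (Fintype.card n : K) - 1 ≠ 0) :
    {S : Matrix n n K | (S.trace • 1 - S).det = 0}.ncard
      ≤ Fintype.card n * Nat.card K ^ (Fintype.card n ^ 2 - 1) := by
  have hdet : (((Fintype.card n : K) - 1) • (1 : Matrix n n K)).det ≠ 0 := by
    simpa [det_smul] using fun h ↦ absurd h hn
  have hline (A : Matrix n n K) (t : K) : (A + t • 1).trace • 1 - (A + t • 1)
      = A.trace • 1 - A + t • ((Fintype.card n : K) - 1) • (1 : Matrix n n K) := by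
    rw [trace_add, trace_smul, trace_one, smul_eq_mul]
    module
  have h := ncard_le_of_forall_line (K := K)
    (Z := {S : Matrix n n K | (S.trace • 1 - S).det = 0}) one_ne_zero fun A ↦ by
      simp only [Set.mem_ofPred_eq, hline]
      exact ncard_setOf_det_add_smul_eq_zero_le (A.trace • 1 - A) hdet
  rwa [finrank_matrix, finrank_self, mul_one, ← sq] at h

theorem ncard_setOf_trace_eq_zero_and_det_eq_zero_le {n : ℕ} :
    {S : Matrix (Fin (n + 2)) (Fin (n + 2)) K | S.trace = 0 ∧ S.det = 0}.ncard
      ≤ (n + 2) * Nat.card K ^ ((n + 2) ^ 2 - 2) := by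
  let tr : Dual K (Matrix (Fin (n + 2)) (Fin (n + 2)) K) := traceLinearMap _ K K
  have htr : tr ≠ 0 := fun h ↦ by
    simpa [tr] using LinearMap.congr_fun h (Matrix.single 0 0 1)
  let E : Matrix (Fin (n + 2)) (Fin (n + 2)) K := (finRotate (n + 2)).permMatrix K
  have hE : E.det ≠ 0 := by
    rw [det_permutation]
    obtain h | h := Int.units_eq_one_or (Equiv.Perm.sign (finRotate (n + 2))) <;> simp [h]
  have hEtr : tr E = 0 := by
    simp [tr, E, trace_permutation, Function.fixedPoints, Function.IsFixedPt]
  have hfinrank : finrank K tr.ker - 1 = (n + 2) ^ 2 - 2 := by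
    have := Dual.finrank_ker_add_one_of_ne_zero htr
    rw [finrank_matrix, finrank_self, mul_one, Fintype.card_fin, ← sq] at this
    lia
  have h := ncard_le_of_forall_line (Z := {S : tr.ker | S.1.det = 0}) (e := ⟨E, hEtr⟩)
    (fun h ↦ hE (by simp [show E = 0 from congrArg Subtype.val h]))
    fun A ↦ ncard_setOf_det_add_smul_eq_zero_le A.1 hE
  rw [hfinrank, Fintype.card_fin] at h
  rw [← Set.ncard_image_of_injective _ Subtype.val_injective] at h
  convert h
  ext S
  simp [tr, and_comm]

end Counting

section MinimalPolynomial

variable {K : Type*} [Field K]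

theorem exists_mulVec_aeval_eq_zero_imp {n : Type*} [Fintype n] [DecidableEq n]
    (S : Matrix n n K) : ∃ v, ∀ p : K[X], aeval S p *ᵥ v = 0 → aeval S p = 0 := by
  obtain ⟨v, hv⟩ := exists_ker_toSpanSingleton_eq_annihilator K[X] (AEval' S.toLin')
  obtain ⟨v, rfl⟩ := (AEval'.of S.toLin').surjective v
  refine ⟨v, fun p hp ↦ ?_⟩
  have haeval : aeval S.toLin' p = (aeval S p).toLin' :=
    aeval_algHom_apply (toLinAlgEquiv' : Matrix n n K ≃ₐ[K] _).toAlgHom S p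
  have hker : p ∈ (LinearMap.toSpanSingleton K[X] _ (AEval'.of S.toLin' v)).ker := by
    rw [LinearMap.mem_ker, LinearMap.toSpanSingleton_apply, ← AEval.of_aeval_smul, End.smul_def,
      haeval, toLin'_apply, hp, map_zero]
  rw [hv, AEval.annihilator_eq_ker_aeval, RingHom.mem_ker, haeval] at hker
  exact toLin'.map_eq_zero_iff.1 hker

theorem exists_forall_exists_aeval_mulVec_eq {n : Type*} [Fintype n] [DecidableEq n]
    {S : Matrix n n K} (hS : (minpoly K S).natDegree = Fintype.card n) :
    ∃ v, ∀ w, ∃ p : K[X], aeval S p *ᵥ v = w := by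
  obtain ⟨v, hv⟩ := exists_mulVec_aeval_eq_zero_imp S
  let φ : degreeLT K (Fintype.card n) →ₗ[K] n → K :=
    (mulVecBilin K K).flip v ∘ₗ (aeval S).toLinearMap ∘ₗ (degreeLT K _).subtype
  have hφ : Function.Injective φ := by
    refine (injective_iff_map_eq_zero φ).2 fun p hp ↦ Subtype.ext ?_
    by_contra hp0
    have hmin := minpoly.degree_le_of_ne_zero K S hp0 (hv p hp)
    rw [degree_eq_natDegree (minpoly.ne_zero S.isIntegral), hS] at hmin
    exact hmin.not_gt (mem_degreeLT.1 p.2)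
  have hfinrank : finrank K (degreeLT K (Fintype.card n)) = finrank K (n → K) := by
    rw [(degreeLTEquiv K _).finrank_eq, finrank_fin_fun, finrank_fintype_fun_eq_card]
  have : FiniteDimensional K (degreeLT K (Fintype.card n)) :=
    (degreeLTEquiv K _).symm.finiteDimensional
  refine ⟨v, fun w ↦ ?_⟩
  obtain ⟨p, hp⟩ := (LinearMap.injective_iff_surjective_of_finrank_eq_finrank hfinrank).1 hφ w
  exact ⟨p, hp⟩

theorem exists_isRoot_minpoly_of_natDegree_le_two {S : Matrix (Fin 3) (Fin 3) K}
    (hS : (minpoly K S).natDegree ≤ 2) : ∃ k, (minpoly K S).IsRoot k := by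
  obtain ⟨g, hg⟩ := S.minpoly_dvd_charpoly
  have hdeg : (minpoly K S).natDegree + g.natDegree = 3 := by
    have hg0 : g ≠ 0 := by
      rintro rfl
      exact S.charpoly_monic.ne_zero (by rw [hg, mul_zero])
    rw [← natDegree_mul (minpoly.ne_zero S.isIntegral) hg0, ← hg, charpoly_natDegree_eq_dim,
      Fintype.card_fin]
  have hpos := minpoly.natDegree_pos (Matrix.isIntegral S)
  obtain h | h : (minpoly K S).natDegree = 1 ∨ g.natDegree = 1 := by lia
  · exact exists_root_of_degree_eq_one ((degree_eq_iff_natDegree_eq_of_pos one_pos).2 h)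
  · obtain ⟨k, hk⟩ := exists_root_of_degree_eq_one ((degree_eq_iff_natDegree_eq_of_pos one_pos).2 h)
    have hchar : S.charpoly.IsRoot k := by rw [hg]; exact root_mul_left_of_isRoot _ hk
    rw [← charpoly_toLin', ← End.hasEigenvalue_iff_isRoot_charpoly] at hchar
    exact ⟨k, by rw [← minpoly_toLin']; exact End.isRoot_of_hasEigenvalue hchar⟩

theorem exists_rank_sub_smul_one_le_one {S : Matrix (Fin 3) (Fin 3) K}
    (hS : (minpoly K S).natDegree ≤ 2) : ∃ a : K, (S - a • 1).rank ≤ 1 := by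
  obtain ⟨k, hk⟩ := exists_isRoot_minpoly_of_natDegree_le_two hS
  obtain ⟨g, hg⟩ := dvd_iff_isRoot.2 hk
  have hmonic : g.Monic :=
    (monic_X_sub_C k).of_mul_monic_left (hg ▸ minpoly.monic S.isIntegral)
  have hdeg : g.natDegree ≤ 1 := by
    rw [hg, (monic_X_sub_C k).natDegree_mul hmonic, natDegree_X_sub_C] at hS
    lia
  have hmul : (S - k • 1) * aeval S g = 0 := by
    have := minpoly.aeval K S
    rwa [hg, map_mul, map_sub, aeval_X, aeval_C, Algebra.algebraMap_eq_smul_one] at this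
  have hrank := rank_add_rank_le_card_of_mul_eq_zero hmul
  rw [Fintype.card_fin] at hrank
  obtain hle | hle : (S - k • 1).rank ≤ 1 ∨ (aeval S g).rank ≤ 1 := by lia
  · exact ⟨k, hle⟩
  obtain hg0 | hg1 : g.natDegree = 0 ∨ g.natDegree = 1 := by lia
  · rw [hmonic.natDegree_eq_zero.1 hg0, map_one, rank_one, Fintype.card_fin] at hle
    lia
  · refine ⟨-g.coeff 0, ?_⟩
    rwa [hmonic.eq_X_add_C hg1, map_add, aeval_X, aeval_C, Algebra.algebraMap_eq_smul_one,
      ← sub_neg_eq_add, ← neg_smul] at hle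

end MinimalPolynomial

section Radical

variable {F : Type} [Field F] [Fintype F] {n : ℕ} {S X : Matrix (Fin n) (Fin n) F}

theorem mem_radical_iff : X ∈ radical F S ↔ S * X + X * S = 0 := by
  have htrace (Y : Matrix (Fin n) (Fin n) F) :
      (S * (X * Y + Y * X)).trace = ((S * X + X * S) * Y).trace := by
    rw [mul_add, add_mul, trace_add, trace_add, mul_assoc, mul_assoc, ← mul_assoc S Y X,
      ← trace_mul_comm X]
  change (∀ Y, (S * (X * Y + Y * X)).trace = 0) ↔ _
  simp only [htrace, ext_iff_trace_mul_right, zero_mul, trace_zero]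

theorem mul_eq_neg_of_mem_radical (hX : X ∈ radical F S) : S * X = -(X * S) :=
  eq_neg_of_add_eq_zero_left (mem_radical_iff.1 hX)

theorem rho_le_finrank {W : Type*} [AddCommGroup W] [Module F W] [FiniteDimensional F W]
    (L : Matrix (Fin n) (Fin n) F →ₗ[F] W) (p : Submodule F W)
    (hp : ∀ X ∈ radical F S, L X ∈ p) (hL : ∀ X ∈ radical F S, L X = 0 → X = 0) :
    rho F S ≤ finrank F p := by
  refine LinearMap.finrank_le_finrank_of_injective (f := L.restrict hp) ?_
  refine (injective_iff_map_eq_zero _).2 fun X hX ↦ Subtype.ext (hL X X.2 ?_)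
  exact congrArg Subtype.val hX

theorem mul_aeval_eq_aeval_neg_mul (hX : X ∈ radical F S) (p : F[X]) :
    X * aeval S p = aeval (-S) p * X := by
  have hSX : X * S = -S * X := by
    rw [neg_mul, mul_eq_neg_of_mem_radical hX, neg_neg]
  induction p using Polynomial.induction_on' with
  | add p q hp hq => rw [map_add, map_add, mul_add, add_mul, hp, hq]
  | monomial k a =>
    have hpow : X * S ^ k = (-S) ^ k * X := SemiconjBy.pow_right hSX k
    rw [aeval_monomial, aeval_monomial, ← mul_assoc, ← Algebra.commutes, mul_assoc, hpow,
      mul_assoc]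

theorem rho_add_rank_le {v : Fin n → F} (hv : ∀ w, ∃ p : F[X], aeval S p *ᵥ v = w)
    {N : Matrix (Fin n) (Fin n) F} (hN : ∀ X ∈ radical F S, N * X = 0) :
    rho F S + N.rank ≤ n := by
  have hle : rho F S ≤ finrank F N.mulVecLin.ker := by
    refine rho_le_finrank ((mulVecBilin F F).flip v) _ (fun X hX ↦ ?_) fun X hX hXv ↦ ?_
    · rw [LinearMap.mem_ker, LinearMap.flip_apply, mulVecBilin_apply, mulVecLin_apply,
        mulVec_mulVec, hN X hX, zero_mulVec]
    · refine ext_of_mulVec_single fun i ↦ ?_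
      obtain ⟨p, hp⟩ := hv (Pi.single i 1)
      rw [← hp, mulVec_mulVec, mul_aeval_eq_aeval_neg_mul hX, ← mulVec_mulVec,
        show X *ᵥ v = 0 from hXv, mulVec_zero, zero_mulVec]
  have hsum := N.mulVecLin.finrank_range_add_finrank_ker
  rw [finrank_fin_fun, ← rank] at hsum
  lia

end Radical

section RadicalFinThree

theorem pow_three_add_trace_adjugate_smul {R : Type*} [CommRing R]
    (S : Matrix (Fin 3) (Fin 3) R) :
    S ^ 3 + S.adjugate.trace • S = S.trace • S ^ 2 + S.det • 1 := by
  ext i j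
  fin_cases i <;> fin_cases j <;>
    simp [pow_succ, mul_apply, Fin.sum_univ_three, adjugate_fin_three, det_fin_three,
      trace_fin_three] <;> ring

/- Both sides are `(x + y) * (y + z) * (z + x)`, where `x, y, z` are the eigenvalues of `S`. -/
theorem det_trace_smul_one_sub {R : Type*} [CommRing R] (S : Matrix (Fin 3) (Fin 3) R) :
    (S.trace • 1 - S).det = S.trace * S.adjugate.trace - S.det := by
  simp [adjugate_fin_three, det_fin_three, trace_fin_three]
  ring

variable {F : Type} [Field F] [Fintype F] {S X : Matrix (Fin 3) (Fin 3) F}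

/- By Cayley-Hamilton the left factor equals both an even and an odd polynomial in `S`, so it both
commutes and anticommutes with `X`. -/
theorem trace_smul_sq_add_det_mul_eq_zero (h2 : (2 : F) ≠ 0) (hX : X ∈ radical F S) :
    (S.trace • S ^ 2 + S.det • 1) * X = 0 := by
  have hneg := mul_eq_neg_of_mem_radical hX
  have heven : (S.trace • S ^ 2 + S.det • 1) * X = X * (S.trace • S ^ 2 + S.det • 1) := by
    have hsq : S ^ 2 * X = X * S ^ 2 := by
      have h := mul_aeval_eq_aeval_neg_mul hX (Polynomial.X ^ 2)
      rwa [aeval_X_pow, aeval_X_pow, even_two.neg_pow, eq_comm] at h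
    rw [add_mul, mul_add, smul_mul_assoc, mul_smul_comm, hsq, smul_one_mul, mul_smul_one]
  have hodd : (S.trace • S ^ 2 + S.det • 1) * X = -(X * (S.trace • S ^ 2 + S.det • 1)) := by
    have hcube : S ^ 3 * X = -(X * S ^ 3) := by
      have h := mul_aeval_eq_aeval_neg_mul hX (Polynomial.X ^ 3)
      rw [aeval_X_pow, aeval_X_pow, Odd.neg_pow (by decide), neg_mul] at h
      rw [h, neg_neg]
    rw [← pow_three_add_trace_adjugate_smul, add_mul, mul_add, smul_mul_assoc, mul_smul_comm,
      hcube, hneg, smul_neg, neg_add]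
  have htwo : (2 : F) • ((S.trace • S ^ 2 + S.det • 1) * X) = 0 := by
    rw [two_smul]
    nth_rw 1 [hodd]
    rw [heven, neg_add_cancel]
  exact (smul_eq_zero.1 htwo).resolve_left h2

theorem det_eq_zero_or_of_rho_ne_zero (h2 : (2 : F) ≠ 0) (hS : rho F S ≠ 0) :
    S.det = 0 ∨ (S.trace • 1 - S).det = 0 := by
  by_contra! h
  refine hS (Submodule.finrank_eq_zero.2 ((Submodule.eq_bot_iff _).2 fun X hX ↦ ?_))
  have hfactor : (S.trace • 1 - S) * (S.trace • S ^ 2 + S.det • 1)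
      = (S.trace • 1 - S).det • S := by
    have hmul : S * (S.trace • S ^ 2 + S.det • 1) = S.trace • S ^ 3 + S.det • S := by
      rw [mul_add, mul_smul_comm, mul_smul_comm, mul_one, ← pow_succ']
    rw [det_trace_smul_one_sub, sub_mul, hmul, smul_one_mul, ← pow_three_add_trace_adjugate_smul]
    module
  have hSX : S * X = 0 := by
    have : (S.trace • 1 - S).det • (S * X) = 0 := by
      rw [← smul_mul_assoc, ← hfactor, mul_assoc, trace_smul_sq_add_det_mul_eq_zero h2 hX, mul_zero]
    exact (smul_eq_zero.1 this).resolve_left h.2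
  have hadj : S.det • X = 0 := by
    rw [← smul_one_mul, ← adjugate_mul, mul_assoc, hSX, mul_zero]
  exact (smul_eq_zero.1 hadj).resolve_left h.1

theorem trace_smul_sq_add_det_ne_zero {K : Type*} [Field K] {S : Matrix (Fin 3) (Fin 3) K}
    (hS : (minpoly K S).natDegree = 3) (h : ¬(S.trace = 0 ∧ S.det = 0)) :
    S.trace • S ^ 2 + S.det • 1 ≠ 0 := by
  intro hN
  let p : K[X] := C S.trace * Polynomial.X ^ 2 + C S.det
  have haeval : aeval S p = 0 := by
    rw [← hN]
    simp [p, Algebra.smul_def]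
  have hp : p = 0 := by
    by_contra hp0
    have hdeg := minpoly.degree_le_of_ne_zero K S hp0 haeval
    have : p.natDegree ≤ 2 := by
      simp only [p]
      compute_degree
    have := natDegree_le_natDegree hdeg
    lia
  refine h ⟨?_, ?_⟩
  · simpa [p, coeff_C] using congrArg (coeff · 2) hp
  · simpa [p] using congrArg (coeff · 0) hp

theorem rho_le_two_or_of_natDegree_minpoly_eq_three (h2 : (2 : F) ≠ 0)
    (hS : (minpoly F S).natDegree = 3) : rho F S ≤ 2 ∨ rho F S ≤ 3 ∧ S.trace = 0 ∧ S.det = 0 := by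
  obtain ⟨v, hv⟩ := exists_forall_exists_aeval_mulVec_eq (hS.trans (Fintype.card_fin 3).symm)
  have hrank := rho_add_rank_le hv fun X ↦ trace_smul_sq_add_det_mul_eq_zero h2
  refine or_iff_not_imp_right.2 fun h ↦ ?_
  by_cases h0 : S.trace = 0 ∧ S.det = 0
  · exact absurd ⟨by lia, h0⟩ h
  have hpos : 0 < (S.trace • S ^ 2 + S.det • 1).rank :=
    Nat.pos_of_ne_zero fun h ↦ trace_smul_sq_add_det_ne_zero hS h0 (by
      rwa [rank, Submodule.finrank_eq_zero, LinearMap.range_eq_bot, ← toLin'_apply',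
        map_eq_zero_iff _ toLin'.injective] at h)
  lia

end RadicalFinThree

section RadicalRankOne

theorem finrank_ker_prodMap_add_two {K V W : Type*} [Field K] [AddCommGroup V] [Module K V]
    [FiniteDimensional K V] [AddCommGroup W] [Module K W] [FiniteDimensional K W] {f : Dual K V}
    {g : Dual K W} (hf : f ≠ 0) (hg : g ≠ 0) :
    finrank K (f.prodMap g).ker + 2 = finrank K V + finrank K W := by
  have hsurj : Function.Surjective (f.prodMap g) :=
    (LinearMap.surjective hf).prodMap (LinearMap.surjective hg)
  have hsum := (f.prodMap g).finrank_range_add_finrank_ker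
  rw [LinearMap.range_eq_top.2 hsurj, finrank_top, finrank_prod, finrank_prod, finrank_self] at hsum
  lia

theorem eq_zero_of_forall_ne {R n : Type*} [CommRing R] [NoZeroDivisors R] [Fintype n]
    {X : Matrix n n R} {u v : n → R} {i j : n} (hi : u i ≠ 0) (hj : v j ≠ 0) (hu : X *ᵥ u = 0)
    (hv : v ᵥ* X = 0) (h : ∀ k ≠ j, ∀ l ≠ i, X k l = 0) : X = 0 := by
  have hrow (k : n) (hk : k ≠ j) (l : n) : X k l = 0 := by
    obtain rfl | hl := eq_or_ne l i
    · have hsum : ∑ m, X k m * u m = X k l * u l :=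
        Fintype.sum_eq_single l fun m hm ↦ by rw [h k hk m hm, zero_mul]
      exact (mul_eq_zero.1 (hsum.symm.trans (congrFun hu k))).resolve_right hi
    · exact h k hk l hl
  ext k l
  obtain rfl | hk := eq_or_ne k j
  · have hsum : ∑ m, v m * X m l = v k * X k l :=
      Fintype.sum_eq_single k fun m hm ↦ by rw [hrow m hm, mul_zero]
    exact (mul_eq_zero.1 (hsum.symm.trans (congrFun hv l))).resolve_left hj
  · exact hrow k hk l

/-- The linear map restricting a matrix to its entries outside row `j` and column `i`. -/
def entriesAway (K : Type*) [Semiring K] {n : Type*} (j i : n) :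
    Matrix n n K →ₗ[K] ({k // k ≠ j} × {l // l ≠ i} → K) :=
  LinearMap.pi fun p ↦ entryLinearMap K K p.1.1 p.2.1

theorem finrank_ne_prod_ne_fun (K : Type*) [Ring K] [StrongRankCondition K] {n : Type*}
    [Fintype n] (j i : n) :
    finrank K ({k // k ≠ j} × {l // l ≠ i} → K) = (Fintype.card n - 1) ^ 2 := by
  classical
  rw [finrank_fintype_fun_eq_card, Fintype.card_prod, Fintype.card_subtype_compl,
    Fintype.card_subtype_compl, Fintype.card_subtype_eq, Fintype.card_subtype_eq, sq]

variable {F : Type} [Field F] [Fintype F] {n : ℕ} {X : Matrix (Fin n) (Fin n) F} {a : F}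
  {u v : Fin n → F}

theorem two_mul_smul_add_vecMulVec_eq_zero (hX : X ∈ radical F (a • 1 + vecMulVec u v)) :
    (2 * a) • X + vecMulVec u (v ᵥ* X) + vecMulVec (X *ᵥ u) v = 0 := by
  rw [← mem_radical_iff.1 hX, add_mul, mul_add, vecMulVec_mul, mul_vecMulVec, smul_one_mul,
    mul_smul_one]
  module

theorem smul_mulVec_of_mem_radical (hX : X ∈ radical F (a • 1 + vecMulVec u v)) :
    (2 * a + v ⬝ᵥ u) • (X *ᵥ u) = -(v ⬝ᵥ X *ᵥ u) • u := by
  have h := congrArg (· *ᵥ u) (two_mul_smul_add_vecMulVec_eq_zero hX)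
  simp only [add_mulVec, smul_mulVec, vecMulVec_mulVec, op_smul_eq_smul, zero_mulVec,
    ← dotProduct_mulVec] at h
  linear_combination (norm := module) h

theorem smul_vecMul_of_mem_radical (hX : X ∈ radical F (a • 1 + vecMulVec u v)) :
    (2 * a + v ⬝ᵥ u) • (v ᵥ* X) = -(v ⬝ᵥ X *ᵥ u) • v := by
  have h := congrArg (v ᵥ* ·) (two_mul_smul_add_vecMulVec_eq_zero hX)
  simp only [vecMul_add, vecMul_smul, vecMul_vecMulVec, vecMul_zero] at h
  linear_combination (norm := module) h

theorem rho_smul_one_add_vecMulVec_le_one (h2 : (2 : F) ≠ 0) (ha : a ≠ 0)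
    (hk : 2 * a + v ⬝ᵥ u ≠ 0) : rho F (a • 1 + vecMulVec u v) ≤ 1 := by
  refine (rho_le_finrank (dotProductBilin F F v ∘ₗ (mulVecBilin F F).flip u) ⊤
    (fun _ _ ↦ trivial) fun X hX hs ↦ ?_).trans (by rw [finrank_top, finrank_self])
  have hs : v ⬝ᵥ X *ᵥ u = 0 := hs
  have hXu := smul_mulVec_of_mem_radical hX
  have hvX := smul_vecMul_of_mem_radical hX
  rw [hs, neg_zero, zero_smul] at hXu hvX
  have h := two_mul_smul_add_vecMulVec_eq_zero hX
  rw [(smul_eq_zero.1 hXu).resolve_left hk, (smul_eq_zero.1 hvX).resolve_left hk, vecMulVec_zero,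
    zero_vecMulVec, add_zero, add_zero] at h
  exact (smul_eq_zero.1 h).resolve_left (mul_ne_zero h2 ha)

theorem rho_smul_one_add_vecMulVec_le_two_mul (h2 : (2 : F) ≠ 0) (ha : a ≠ 0)
    (hk : 2 * a + v ⬝ᵥ u = 0) : rho F (a • 1 + vecMulVec u v) ≤ 2 * (n - 1) := by
  have huv : v ⬝ᵥ u ≠ 0 := fun h ↦ mul_ne_zero h2 ha (by rwa [h, add_zero] at hk)
  have hu : u ≠ 0 := by rintro rfl; exact huv (dotProduct_zero v)
  have hv : v ≠ 0 := by rintro rfl; exact huv (zero_dotProduct u)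
  have hker := finrank_ker_prodMap_add_two
    ((dotProductEquiv F (Fin n)).map_ne_zero_iff.2 hv)
    ((dotProductEquiv F (Fin n)).map_ne_zero_iff.2 hu)
  rw [finrank_fin_fun] at hker
  refine (rho_le_finrank (((mulVecBilin F F).flip u).prod (vecMulBilin F F v)) _
    (fun X hX ↦ ?_) fun X hX h0 ↦ ?_).trans (Nat.le_of_add_le_add_right (hker.trans_le (by lia)))
  · have hs := smul_mulVec_of_mem_radical hX
    rw [hk, zero_smul, eq_comm, smul_eq_zero, neg_eq_zero] at hs
    have hs := hs.resolve_right hu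
    have hs' := hs
    rw [dotProduct_mulVec, dotProduct_comm] at hs'
    exact Prod.ext hs hs'
  · have hXu : X *ᵥ u = 0 := congrArg Prod.fst h0
    have hvX : v ᵥ* X = 0 := congrArg Prod.snd h0
    have h := two_mul_smul_add_vecMulVec_eq_zero hX
    rw [hXu, hvX, vecMulVec_zero, zero_vecMulVec, add_zero, add_zero] at h
    exact (smul_eq_zero.1 h).resolve_left (mul_ne_zero h2 ha)

theorem rho_vecMulVec_le_of_dotProduct_ne_zero (h2 : (2 : F) ≠ 0) (huv : v ⬝ᵥ u ≠ 0) :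
    rho F (vecMulVec u v) ≤ (n - 1) ^ 2 := by
  obtain ⟨i, hi⟩ := Function.ne_iff.1 fun h : u = 0 ↦ huv (by rw [h, dotProduct_zero])
  obtain ⟨j, hj⟩ := Function.ne_iff.1 fun h : v = 0 ↦ huv (by rw [h, zero_dotProduct])
  refine (rho_le_finrank (entriesAway F j i) ⊤ (fun _ _ ↦ trivial) fun X hX h0 ↦ ?_).trans
    (by rw [finrank_top, finrank_ne_prod_ne_fun, Fintype.card_fin])
  rw [← zero_add (vecMulVec u v), ← zero_smul F 1] at hX
  have hXu := smul_mulVec_of_mem_radical hX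
  have hvX := smul_vecMul_of_mem_radical hX
  rw [mul_zero, zero_add] at hXu hvX
  have hs : v ⬝ᵥ X *ᵥ u = 0 := by
    have h := congrArg (v ⬝ᵥ ·) hXu
    simp only [dotProduct_smul, smul_eq_mul] at h
    have h2s : 2 * (v ⬝ᵥ u) * (v ⬝ᵥ X *ᵥ u) = 0 := by linear_combination h
    exact (mul_eq_zero.1 h2s).resolve_left (mul_ne_zero h2 huv)
  rw [hs, neg_zero, zero_smul] at hXu hvX
  exact eq_zero_of_forall_ne hi hj ((smul_eq_zero.1 hXu).resolve_left huv)
    ((smul_eq_zero.1 hvX).resolve_left huv) fun k hk l hl ↦ congrFun h0 (⟨k, hk⟩, ⟨l, hl⟩)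

theorem rho_vecMulVec_le (hu : u ≠ 0) (hv : v ≠ 0) :
    rho F (vecMulVec u v) ≤ (n - 1) ^ 2 + 1 := by
  obtain ⟨i, hi⟩ := Function.ne_iff.1 hu
  obtain ⟨j, hj⟩ := Function.ne_iff.1 hv
  refine (rho_le_finrank ((entriesAway F j i).prod (LinearMap.proj i ∘ₗ (mulVecBilin F F).flip u)) ⊤
    (fun _ _ ↦ trivial) fun X hX h0 ↦ ?_).trans
    (by rw [finrank_top, finrank_prod, finrank_ne_prod_ne_fun, Fintype.card_fin, finrank_self])
  have hXui : (X *ᵥ u) i = 0 := congrArg Prod.snd h0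
  have h := mem_radical_iff.1 hX
  rw [vecMulVec_mul, mul_vecMulVec] at h
  have hvX : v ᵥ* X = 0 := by
    ext l
    have hl := congrFun₂ h i l
    rw [Matrix.add_apply, vecMulVec_apply, vecMulVec_apply, hXui, zero_mul, add_zero] at hl
    exact (mul_eq_zero.1 hl).resolve_left hi
  have hXu : X *ᵥ u = 0 := by
    rw [hvX, vecMulVec_zero, zero_add] at h
    exact funext fun k ↦ (mul_eq_zero.1 (congrFun₂ h k j)).resolve_right hj
  exact eq_zero_of_forall_ne hi hj hXu hvX fun k hk l hl ↦
    congrFun (congrArg Prod.fst h0) (⟨k, hk⟩, ⟨l, hl⟩)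

end RadicalRankOne

section RhoFinThree

variable {F : Type} [Field F] [Fintype F] {S : Matrix (Fin 3) (Fin 3) F}

theorem rho_le_two_or_rho_le_three_or_exists_rank_sub_smul_one_le_one
    (S : Matrix (Fin 3) (Fin 3) F) (h2 : (2 : F) ≠ 0) :
    rho F S ≤ 2 ∨ rho F S ≤ 3 ∧ S.trace = 0 ∧ S.det = 0 ∨ ∃ a : F, (S - a • 1).rank ≤ 1 := by
  have hdeg : (minpoly F S).natDegree ≤ 3 :=
    (natDegree_le_of_dvd S.minpoly_dvd_charpoly S.charpoly_monic.ne_zero).trans_eq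
      S.charpoly_natDegree_eq_dim
  obtain hlt | heq := hdeg.lt_or_eq
  · exact .inr (.inr (exists_rank_sub_smul_one_le_one (Nat.le_of_lt_succ hlt)))
  · exact (rho_le_two_or_of_natDegree_minpoly_eq_three h2 heq).imp_right .inl

theorem exists_eq_smul_one_add_vecMulVec_of_four_le_rho (h2 : (2 : F) ≠ 0) (hρ : 4 ≤ rho F S) :
    ∃ (a : F) (u v : Fin 3 → F), S = a • 1 + vecMulVec u v ∧ (a ≠ 0 → 2 * a + v ⬝ᵥ u = 0) := by
  obtain h | ⟨h, -⟩ | ⟨a, ha⟩ :=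
    rho_le_two_or_rho_le_three_or_exists_rank_sub_smul_one_le_one S h2
  · lia
  · lia
  · obtain ⟨u, v, -, huv⟩ := exists_eq_vecMulVec_of_rank_le_one ha
    obtain rfl := sub_eq_iff_eq_add'.1 huv
    refine ⟨a, u, v, rfl, fun ha0 ↦ ?_⟩
    by_contra hk
    have := rho_smul_one_add_vecMulVec_le_one h2 ha0 hk
    lia

theorem exists_rank_le_one_of_four_le_rho (h2 : (2 : F) ≠ 0) (hρ : 4 ≤ rho F S) :
    ∃ A : Matrix (Fin 3) (Fin 3) F, A.rank ≤ 1 ∧ (S = A ∨ S = A - (A.trace / 2) • 1) := by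
  obtain ⟨a, u, v, rfl, hk⟩ := exists_eq_smul_one_add_vecMulVec_of_four_le_rho h2 hρ
  refine ⟨vecMulVec u v, rank_vecMulVec_le u v, ?_⟩
  refine (eq_or_ne a 0).imp (fun ha ↦ by rw [ha, zero_smul, zero_add]) fun ha ↦ ?_
  have ha' : a = -(v ⬝ᵥ u / 2) := by
    field_simp
    linear_combination hk ha
  rw [trace_vecMulVec, dotProduct_comm, sub_eq_neg_add, ← neg_smul, ← ha']

theorem rho_le_four_or_exists_eq_vecMulVec (S : Matrix (Fin 3) (Fin 3) F) (h2 : (2 : F) ≠ 0) :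
    rho F S ≤ 4 ∨ ∃ u v : Fin 3 → F, S = vecMulVec u v ∧ v ⬝ᵥ u = 0 := by
  refine or_iff_not_imp_left.2 fun hρ ↦ ?_
  obtain ⟨a, u, v, rfl, hk⟩ :=
    exists_eq_smul_one_add_vecMulVec_of_four_le_rho h2 (Nat.le_of_not_le hρ)
  obtain rfl : a = 0 := by
    by_contra ha
    exact hρ (rho_smul_one_add_vecMulVec_le_two_mul h2 ha (hk ha))
  rw [zero_smul, zero_add] at hρ ⊢
  exact ⟨u, v, rfl, by_contra fun h ↦ hρ (rho_vecMulVec_le_of_dotProduct_ne_zero h2 h)⟩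

theorem rank_le_one_and_trace_eq_zero_of_five_le_rho (h2 : (2 : F) ≠ 0) (hρ : 5 ≤ rho F S) :
    S.rank ≤ 1 ∧ S.trace = 0 := by
  obtain h | ⟨u, v, rfl, huv⟩ := rho_le_four_or_exists_eq_vecMulVec S h2
  · lia
  · exact ⟨rank_vecMulVec_le u v, by rwa [trace_vecMulVec, dotProduct_comm]⟩

theorem rho_le_five (h2 : (2 : F) ≠ 0) (hS : S ≠ 0) : rho F S ≤ 5 := by
  obtain h | ⟨u, v, rfl, -⟩ := rho_le_four_or_exists_eq_vecMulVec S h2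
  · lia
  · refine rho_vecMulVec_le ?_ ?_ <;> rintro rfl
    exacts [hS (zero_vecMulVec v), hS (vecMulVec_zero u)]

end RhoFinThree

section RhoCounting

variable {F : Type} [Field F] [Fintype F]

theorem ncard_setOf_rho_ne_zero_le (h2 : (2 : F) ≠ 0) :
    {S : Matrix (Fin 3) (Fin 3) F | rho F S ≠ 0}.ncard ≤ 6 * Nat.card F ^ 8 := by
  have hsub : {S : Matrix (Fin 3) (Fin 3) F | rho F S ≠ 0} ⊆
      {S | S.det = 0} ∪ {S | (S.trace • 1 - S).det = 0} :=
    fun S hS ↦ det_eq_zero_or_of_rho_ne_zero h2 hS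
  have hdet := ncard_setOf_det_eq_zero_le (K := F) (n := Fin 3)
  have htr := ncard_setOf_det_trace_sub_eq_zero_le (K := F) (n := Fin 3)
    (by rwa [Fintype.card_fin, Nat.cast_ofNat, show (3 : F) - 1 = 2 by norm_num])
  grw [Set.ncard_le_ncard hsub, Set.ncard_union_le, hdet, htr]
  norm_num [← add_mul]

theorem ncard_setOf_three_le_rho_le (h2 : (2 : F) ≠ 0) :
    {S : Matrix (Fin 3) (Fin 3) F | 3 ≤ rho F S}.ncard ≤ 6 * Nat.card F ^ 7 := by
  have hsub : {S : Matrix (Fin 3) (Fin 3) F | 3 ≤ rho F S} ⊆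
      {S | S.trace = 0 ∧ S.det = 0} ∪ {S | ∃ a : F, (S - a • 1).rank ≤ 1} := fun S hS ↦ by
    obtain h | ⟨-, h⟩ | h :=
      rho_le_two_or_rho_le_three_or_exists_rank_sub_smul_one_le_one S h2
    · exact absurd (hS.trans h) (by decide)
    · exact .inl h
    · exact .inr h
  have hnil := ncard_setOf_trace_eq_zero_and_det_eq_zero_le (K := F) (n := 1)
  have hscal := ncard_setOf_exists_rank_sub_smul_le_one_le (K := F) (n := Fin 3)
  grw [Set.ncard_le_ncard hsub, Set.ncard_union_le, hnil, hscal]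
  have hq : Nat.card F ^ 6 ≤ Nat.card F ^ 7 := Nat.pow_le_pow_right Nat.card_pos (by decide)
  rw [Fintype.card_fin]
  lia

theorem ncard_setOf_four_le_rho_le (h2 : (2 : F) ≠ 0) :
    {S : Matrix (Fin 3) (Fin 3) F | 4 ≤ rho F S}.ncard ≤ 6 * Nat.card F ^ 5 := by
  let f (A : Matrix (Fin 3) (Fin 3) F) := A - (A.trace / 2) • 1
  have hsub : {S : Matrix (Fin 3) (Fin 3) F | 4 ≤ rho F S} ⊆
      {A | A.rank ≤ 1} ∪ f '' {A | A.rank ≤ 1} := fun S hS ↦ by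
    obtain ⟨A, hA, rfl | rfl⟩ := exists_rank_le_one_of_four_le_rho h2 hS
    exacts [.inl hA, .inr ⟨A, hA, rfl⟩]
  have hrank := ncard_setOf_rank_le_one_le (K := F) (n := Fin 3)
  grw [Set.ncard_le_ncard hsub, Set.ncard_union_le, Set.ncard_image_le, hrank]
  norm_num [← add_mul]

theorem ncard_setOf_five_le_rho_le (h2 : (2 : F) ≠ 0) :
    {S : Matrix (Fin 3) (Fin 3) F | 5 ≤ rho F S}.ncard ≤ 3 * Nat.card F ^ 4 := by
  have hsub : {S : Matrix (Fin 3) (Fin 3) F | 5 ≤ rho F S} ⊆ {A | A.rank ≤ 1 ∧ A.trace = 0} :=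
    fun S hS ↦ rank_le_one_and_trace_eq_zero_of_five_le_rho h2 hS
  exact (Set.ncard_le_ncard hsub).trans ncard_setOf_rank_le_one_and_trace_eq_zero_le

theorem exists_ncard_setOf_le_rho_le (h2 : (2 : F) ≠ 0) {k : ℕ} (hk : k ≤ 5) :
    ∃ e, 2 * e + 3 * k ≤ 23 ∧
      {S : Matrix (Fin 3) (Fin 3) F | k ≤ rho F S}.ncard ≤ 6 * Nat.card F ^ e := by
  have hone := ncard_setOf_rho_ne_zero_le h2
  interval_cases k
  · refine ⟨9, by decide, (Set.ncard_le_card _).trans ?_⟩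
    rw [Module.natCard_eq_pow_finrank (K := F), finrank_matrix, finrank_self, mul_one,
      Fintype.card_fin]
    lia
  · exact ⟨8, by decide, by simpa only [Nat.one_le_iff_ne_zero] using hone⟩
  · refine ⟨8, by decide, (Set.ncard_le_ncard fun S hS ↦ ?_).trans hone⟩
    exact Nat.ne_zero_of_lt hS
  · exact ⟨7, by decide, ncard_setOf_three_le_rho_le h2⟩
  · exact ⟨5, by decide, ncard_setOf_four_le_rho_le h2⟩
  · exact ⟨4, by decide, (ncard_setOf_five_le_rho_le h2).trans (by lia)⟩

open Finset

variable [DecidableEq F] {r : ℝ}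

theorem sum_rpow_rho_eq_le (h2 : (2 : F) ≠ 0) (hr : 3 ≤ r) {k : ℕ} (hk : k ≤ 5) :
    ∑ S : Matrix (Fin 3) (Fin 3) F with S ≠ 0 ∧ rho F S = k,
        (Fintype.card F : ℝ) ^ (r * (9 + rho F S) / 2) ≤
      6 * (Fintype.card F : ℝ) ^ (7 * r + 4) := by
  obtain ⟨e, he, hcard⟩ := exists_ncard_setOf_le_rho_le h2 hk
  let s : Finset (Matrix (Fin 3) (Fin 3) F) := {S | S ≠ 0 ∧ rho F S = k}
  have hs : (s : Set (Matrix (Fin 3) (Fin 3) F)) ⊆ {S | k ≤ rho F S} :=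
    fun S hS ↦ (mem_filter.1 hS).2.2.ge
  have hcount : (#s : ℝ) ≤ 6 * (Fintype.card F : ℝ) ^ (e : ℝ) := by
    rw [Real.rpow_natCast, ← Nat.card_eq_fintype_card, ← Set.ncard_coe_finset]
    exact_mod_cast (Set.ncard_le_ncard hs).trans hcard
  have hq : 1 ≤ (Fintype.card F : ℝ) := Nat.one_le_cast.2 Fintype.card_pos
  set q : ℝ := (Fintype.card F : ℝ)
  have hexp : e + r * (9 + k) / 2 ≤ 7 * r + 4 := by
    have he' : (2 * e + 3 * k : ℝ) ≤ 23 := by exact_mod_cast he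
    have hk' : (k : ℝ) ≤ 5 := by exact_mod_cast hk
    linarith [mul_nonneg (sub_nonneg.2 hr) (sub_nonneg.2 hk')]
  calc ∑ S ∈ s, q ^ (r * (9 + rho F S) / 2)
      = #s * q ^ (r * (9 + k) / 2) := by
        rw [← nsmul_eq_mul, ← sum_const]
        exact sum_congr rfl fun S hS ↦ by rw [(mem_filter.1 hS).2.2]
    _ ≤ 6 * q ^ (e : ℝ) * q ^ (r * (9 + k) / 2) := by gcongr
    _ = 6 * q ^ (e + r * (9 + k) / 2) := by rw [mul_assoc, ← Real.rpow_add (by positivity)]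
    _ ≤ 6 * q ^ (7 * r + 4) := by gcongr

theorem rho_sum_rank_three_general (hF : Odd (Fintype.card F)) (hr : 3 ≤ r) :
    ∑ S : Matrix (Fin 3) (Fin 3) F with S ≠ 0,
        (Fintype.card F : ℝ) ^ (r * (9 + rho F S) / 2) ≤
      36 * (Fintype.card F : ℝ) ^ (7 * r + 4) := by
  have h2 : (2 : F) ≠ 0 := Ring.two_ne_zero fun h ↦
    Nat.not_even_iff_odd.2 hF (Nat.even_iff.2 (FiniteField.even_card_of_char_two h))
  have hmaps : ∀ S ∈ ({S : Matrix (Fin 3) (Fin 3) F | S ≠ 0} : Finset _), rho F S ∈ range 6 :=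
    fun S hS ↦ mem_range_succ_iff.2 (rho_le_five h2 (mem_filter.1 hS).2)
  rw [← sum_fiberwise_of_maps_to hmaps]
  refine (sum_le_card_nsmul (range 6) _ (6 * (Fintype.card F : ℝ) ^ (7 * r + 4))
    fun k hk ↦ ?_).trans_eq ?_
  · rw [filter_filter]
    exact sum_rpow_rho_eq_le h2 hr (mem_range_succ_iff.1 hk)
  · rw [card_range, nsmul_eq_mul, ← mul_assoc]
    norm_num

end RhoCounting

/-- The incidence-contribution bound of Table 2: for `r ≥ 3`,
`Σ_{S ≠ 0 in M_3(F_q)} q^{r(9+ρ_S)/2} ≤ c q^{7r+4}` uniformly over odd `q`. -/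
theorem rho_sum_rank_three (r : ℕ) (hr : 3 ≤ r) :
    ∃ c : ℝ, 0 < c ∧
      ∀ (F : Type) [Field F] [Fintype F] [DecidableEq F],
        Odd (Fintype.card F) →
        ∑ S ∈ Finset.univ.filter (fun S : Matrix (Fin 3) (Fin 3) F => S ≠ 0),
            (Fintype.card F : ℝ) ^ ((r : ℝ) * (9 + (rho F S : ℝ)) / 2) ≤
          c * (Fintype.card F : ℝ) ^ (7 * r + 4) := by
  refine ⟨36, by norm_num, fun F _ _ _ hF ↦ ?_⟩
  exact_mod_cast rho_sum_rank_three_general hF (r := r) (by exact_mod_cast hr)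
end
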